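/- For every permutation w of {1,…,n}, the coefficient of B^{n²−ℓ(w)} in the generic pipe dream polynomial G_w, viewed as a polynomial in B with coefficients in ℤ[x₁,…,xₙ,y₁,…,yₙ,A], equals the sum over all classic pipe dreams δ ∈ GPDs(w) of the product over all cross tiles at positions (i,j) of δ of (A + x_i − y_j); moreover this sum equals the double Schubert polynomial S_w evaluated at (A+x₁,…,A+xₙ; y₁,…,yₙ). -/

import Mathlib

open scoped Classical

namespace GPDpaper

/-- Raw data of a pipe-filling of the `n × n` grid: `d.1 i j` is the (optional) pipe label on
the vertical edge at row `i`, West of column `j` (so `d.1 i 0` is on the West boundary and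
`d.1 i (Fin.last n)` on the East boundary); `d.2 i j` is the label on the horizontal edge
North of row `i` in column `j` (so `d.2 0 j` is on the North boundary and
`d.2 (Fin.last n) j` on the South boundary).  Rows are numbered from the top. -/
abbrev Pipes (n : ℕ) :=
  (Fin n → Fin (n+1) → Option (Fin n)) × (Fin (n+1) → Fin n → Option (Fin n))

variable {n : ℕ}

/-- Label on the West edge of square `(i,j)`. -/
def We (d : Pipes n) (i j : Fin n) : Option (Fin n) := d.1 i j.castSucc
/-- Label on the East edge of square `(i,j)`. -/
def Ea (d : Pipes n) (i j : Fin n) : Option (Fin n) := d.1 i j.succ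
/-- Label on the North edge of square `(i,j)`. -/
def No (d : Pipes n) (i j : Fin n) : Option (Fin n) := d.2 i.castSucc j
/-- Label on the South edge of square `(i,j)`. -/
def So (d : Pipes n) (i j : Fin n) : Option (Fin n) := d.2 i.succ j

/-- The local condition making `d` a generic pipe dream: at each square, the pair of labels
leaving through the East and North edges is either `(W,S)` (cross/horizontal/vertical/blank
tile) or `(S,W)` (bump/elbow/blank tile); moreover two edges of the same square never carry
the same pipe label. -/
def IsValid (d : Pipes n) : Prop :=
  ∀ i j : Fin n,
    ((Ea d i j, No d i j) = (We d i j, So d i j) ∨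
     (Ea d i j, No d i j) = (So d i j, We d i j)) ∧
    (We d i j = So d i j → We d i j = none)

/-- The seven generic pipe dream tiles. -/
inductive Tile where
  | cross | bump | nw | se | horiz | vert | blank
deriving DecidableEq

/-- The tile of a pipe-filling at square `(i,j)`. -/
def tile (d : Pipes n) (i j : Fin n) : Tile :=
  match We d i j, So d i j with
  | some a, some _ => if Ea d i j = some a then .cross else .bump
  | some _, none => if No d i j = none then .horiz else .nw
  | none, some _ => if No d i j = none then .se else .vert
  | none, none => .blank

/-- `d` is a generic pipe dream for the permutation `w`: it is locally valid, the pipe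
entering the West boundary in row `i` is labelled `i`, no pipes meet the East and South
boundaries, and the pipe exiting the North boundary in column `j` is labelled `w⁻¹(j)`. -/
def IsGPDof (w : Equiv.Perm (Fin n)) (d : Pipes n) : Prop :=
  IsValid d ∧
  (∀ i : Fin n, d.1 i 0 = some i) ∧
  (∀ i : Fin n, d.1 i (Fin.last n) = none) ∧
  (∀ j : Fin n, d.2 (Fin.last n) j = none) ∧
  (∀ j : Fin n, d.2 0 j = some (w.symm j))

/-- Number of tiles of `d` of a given type. -/
noncomputable def tileCount (d : Pipes n) (t : Tile) : ℕ :=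
  (Finset.univ.filter (fun p : Fin n × Fin n => tile d p.1 p.2 = t)).card

/-- The pipes labelled `p` and `q` cross at the tile `(i,j)`. -/
def CrossesAt (d : Pipes n) (p q : Fin n) (i j : Fin n) : Prop :=
  tile d i j = .cross ∧
  ((We d i j = some p ∧ So d i j = some q) ∨ (We d i j = some q ∧ So d i j = some p))

/-- The number of tiles at which the pipes labelled `p` and `q` cross. -/
noncomputable def crossCount (d : Pipes n) (p q : Fin n) : ℕ :=
  (Finset.univ.filter (fun ij : Fin n × Fin n => CrossesAt d p q ij.1 ij.2)).card

/-- No two pipes of `d` cross each other at more than one tile. -/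
def NoDoubleCross (d : Pipes n) : Prop := ∀ p q : Fin n, crossCount d p q ≤ 1

/-- Number of inversions (Coxeter length) of a permutation. -/
def invCount (w : Equiv.Perm (Fin n)) : ℕ :=
  (Finset.univ.filter (fun p : Fin n × Fin n => p.1 < p.2 ∧ w p.2 < w p.1)).card

/-- Classic pipe dream (in 1-indexed terms: crosses and bumps for `i+j ≤ n`, NW-elbows on the
antidiagonal `i+j = n+1`, blanks below, and no two pipes crossing twice). -/
def IsClassic (d : Pipes n) : Prop :=
  (∀ i j : Fin n, (i : ℕ) + (j : ℕ) + 2 ≤ n → tile d i j = .cross ∨ tile d i j = .bump) ∧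
  (∀ i j : Fin n, (i : ℕ) + (j : ℕ) + 2 = n + 1 → tile d i j = .nw) ∧
  (∀ i j : Fin n, (i : ℕ) + (j : ℕ) + 2 > n + 1 → tile d i j = .blank) ∧
  NoDoubleCross d

/-- Bumpless-reduced: no bump tiles and no two pipes crossing twice. -/
def IsBumplessReduced (d : Pipes n) : Prop :=
  (∀ i j : Fin n, tile d i j ≠ .bump) ∧ NoDoubleCross d


/-- Variables `x₁,…,xₙ, y₁,…,yₙ, A` (the coefficient ring for polynomials in `B`). -/
inductive XYA (n : ℕ) where
  | x (i : Fin n) | y (j : Fin n) | A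

/-- Variables `x₁,…,xₙ, y₁,…,yₙ` of double Schubert polynomials. -/
inductive XY (n : ℕ) where
  | x (i : Fin n) | y (j : Fin n)

/-- The weight of a generic pipe dream, viewed as a polynomial in the variable `B` with
coefficients in `ℤ[x₁,…,xₙ,y₁,…,yₙ,A]`. -/
noncomputable def wtB (d : Pipes n) : Polynomial (MvPolynomial (XYA n) ℤ) :=
  ∏ i : Fin n, ∏ j : Fin n,
    match tile d i j with
    | .cross | .horiz | .vert =>
        Polynomial.C (MvPolynomial.X XYA.A + MvPolynomial.X (XYA.x i) - MvPolynomial.X (XYA.y j))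
    | .blank =>
        Polynomial.X - Polynomial.C (MvPolynomial.X (XYA.x i) - MvPolynomial.X (XYA.y j))
    | _ => Polynomial.X + Polynomial.C (MvPolynomial.X XYA.A)

/-- The generic pipe dream polynomial `G_w`, as a polynomial in `B`. -/
noncomputable def GB (w : Equiv.Perm (Fin n)) : Polynomial (MvPolynomial (XYA n) ℤ) :=
  ∑ d ∈ Finset.univ.filter (fun d : Pipes n => IsGPDof w d), wtB d

/-- The adjacent transposition `sᵢ` exchanging `i` and `i+1` (0-indexed). -/
def adjSwap (i : Fin n) (hi : (i : ℕ) + 1 < n) : Equiv.Perm (Fin n) :=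
  Equiv.swap i ⟨(i : ℕ) + 1, hi⟩

/-! ### Part A: nilCoxeter operators -/

section Alg
variable {R : Type*} [CommRing R]

/-- adjacent transposition of `ℕ` -/
def sN (k : ℕ) : Equiv.Perm ℕ := Equiv.swap k (k+1)

lemma sN_left (k : ℕ) : sN k k = k + 1 := by simp [sN]
lemma sN_right (k : ℕ) : sN k (k+1) = k := by simp [sN]
lemma sN_ne (k a : ℕ) (h1 : a ≠ k) (h2 : a ≠ k+1) : sN k a = a := by
  simp [sN, Equiv.swap_apply_of_ne_of_ne h1 h2]
lemma sN_apply (k a : ℕ) : sN k a = if a = k then k+1 else if a = k+1 then k else a := by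
  simp [sN, Equiv.swap_apply_def]
lemma sN_mul (k : ℕ) : sN k * sN k = 1 := by simp [sN]
lemma sN_inv (k : ℕ) : (sN k)⁻¹ = sN k := by simp [sN]

/-- nilCoxeter operator -/
def U (k : ℕ) : Module.End R (Equiv.Perm ℕ → R) where
  toFun F := fun v => if v (k+1) < v k then F (v * sN k) else 0
  map_add' F G := by
    funext v
    by_cases h : v (k+1) < v k <;> simp [h]
  map_smul' r F := by
    funext v
    by_cases h : v (k+1) < v k <;> simp [h]

lemma U_apply (k : ℕ) (F : Equiv.Perm ℕ → R) (v : Equiv.Perm ℕ) :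
    U k F v = if v (k+1) < v k then F (v * sN k) else 0 := rfl

lemma U_sq (k : ℕ) : (U k * U k : Module.End R (Equiv.Perm ℕ → R)) = 0 := by
  ext F v
  simp only [Module.End.mul_apply, U_apply, Equiv.Perm.mul_apply, sN_left, sN_right]
  simp only [LinearMap.zero_apply, Pi.zero_apply]
  split_ifs with h1 h2
  · omega
  · rfl
  · rfl

lemma U_comm (k l : ℕ) (h : k + 2 ≤ l) :
    (U k * U l : Module.End R (Equiv.Perm ℕ → R)) = U l * U k := by
  ext F v
  have e : v * sN k * sN l = v * sN l * sN k := by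
    ext a
    simp only [Equiv.Perm.mul_apply, sN_apply]
    congr 1
    split_ifs <;> omega
  simp only [Module.End.mul_apply, U_apply, Equiv.Perm.mul_apply, e]
  simp only [sN_ne k (l+1) (by omega) (by omega), sN_ne k l (by omega) (by omega),
    sN_ne l (k+1) (by omega) (by omega), sN_ne l k (by omega) (by omega)]
  split_ifs <;> rfl

lemma U_braid (k : ℕ) :
    (U k * U (k+1) * U k : Module.End R (Equiv.Perm ℕ → R)) = U (k+1) * U k * U (k+1) := by
  ext F v
  have e : v * sN k * sN (k+1) * sN k = v * sN (k+1) * sN k * sN (k+1) := by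
    ext a
    simp only [Equiv.Perm.mul_apply, sN_apply]
    congr 1
    split_ifs <;> omega
  simp only [Module.End.mul_apply, U_apply, Equiv.Perm.mul_apply, e]
  have h1 : sN k (k+1+1) = k+1+1 := sN_ne _ _ (by omega) (by omega)
  have h2 : sN (k+1) k = k := sN_ne _ _ (by omega) (by omega)
  simp only [sN_left, sN_right, h1, h2]
  split_ifs <;> rfl

/-- `1 + t u_k` -/
def hh (k : ℕ) (t : R) : Module.End R (Equiv.Perm ℕ → R) := 1 + t • U k

lemma hh_comm (k l : ℕ) (h : k + 2 ≤ l) (a b : R) : hh k a * hh l b = hh l b * hh k a := by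
  simp only [hh, mul_add, add_mul, one_mul, mul_one, smul_mul_assoc, mul_smul_comm,
    U_comm k l h]
  module

lemma hh_add (k : ℕ) (a b : R) : hh k a * hh k b = hh k (a+b) := by
  simp only [hh, mul_add, add_mul, one_mul, mul_one, smul_mul_assoc, mul_smul_comm,
    U_sq, smul_zero, add_smul]
  module

lemma hh_YB (k : ℕ) (a b : R) :
    hh k a * hh (k+1) (a+b) * hh k b = hh (k+1) b * hh k (a+b) * hh (k+1) a := by
  simp only [hh, mul_add, add_mul, one_mul, mul_one, smul_mul_assoc, mul_smul_comm,
    U_sq, smul_zero, smul_add, U_braid, smul_smul]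
  module

/-- a row of the triangle -/
def RowOp : ℕ → ℕ → R → (ℕ → R) → Module.End R (Equiv.Perm ℕ → R)
  | _, 0, _, _ => 1
  | k, m+1, x, y => hh k (x - y 0) * RowOp (k+1) m x (fun j => y (j+1))

lemma RowOp_comm (k : ℕ) (a x : R) : ∀ (m l : ℕ) (y : ℕ → R), k + 2 ≤ l →
    hh k a * RowOp l m x y = RowOp l m x y * hh k a := by
  intro m
  induction m with
  | zero => intro l y h; simp [RowOp]
  | succ m ih =>
    intro l y h
    simp only [RowOp]
    rw [← mul_assoc, hh_comm k l h, mul_assoc, ih (l+1) _ (by omega), mul_assoc]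

lemma RowOp_swap (x x' : R) : ∀ (m k : ℕ) (y : ℕ → R),
    hh k (x' - x) * (RowOp (k+1) m x' y * RowOp k (m+1) x y)
      = RowOp (k+1) m x y * RowOp k (m+1) x' y := by
  intro m
  induction m with
  | zero =>
    intro k y
    simp only [RowOp, one_mul, mul_one, hh_add]
    congr 1; ring
  | succ m ih =>
    intro k y
    have IH := ih (k+1) (fun j => y (j+1))
    rw [RowOp, RowOp, RowOp, RowOp]
    set P' := RowOp (k+1+1) m x' (fun j => y (j+1))
    set P := RowOp (k+1+1) m x (fun j => y (j+1))
    set Q := RowOp (k+1) (m+1) x (fun j => y (j+1))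
    set Q' := RowOp (k+1) (m+1) x' (fun j => y (j+1))
    have yb := hh_YB k (x' - x) (x - y 0)
    rw [show x' - x + (x - y 0) = x' - y 0 by ring] at yb
    have c1 : hh k (x - y 0) * P' = P' * hh k (x - y 0) := RowOp_comm _ _ _ _ _ _ (by omega)
    have c2 : hh k (x' - y 0) * P = P * hh k (x' - y 0) := RowOp_comm _ _ _ _ _ _ (by omega)
    calc hh k (x' - x) * (hh (k+1) (x' - y 0) * P' * (hh k (x - y 0) * Q))
        = hh k (x' - x) * hh (k+1) (x' - y 0) * (P' * hh k (x - y 0)) * Q := by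
          simp only [mul_assoc]
      _ = (hh k (x' - x) * hh (k+1) (x' - y 0) * hh k (x - y 0)) * P' * Q := by
          rw [← c1]; simp only [mul_assoc]
      _ = hh (k+1) (x - y 0) * hh k (x' - y 0) * (hh (k+1) (x' - x) * (P' * Q)) := by
          rw [yb]; simp only [mul_assoc]
      _ = hh (k+1) (x - y 0) * (hh k (x' - y 0) * P) * Q' := by
          rw [IH]; simp only [mul_assoc]
      _ = _ := by rw [c2]; simp only [mul_assoc]; rfl

/-- operator of a list of cells -/
def opL (t : ℕ × ℕ → R) (l : List (ℕ × ℕ)) : Module.End R (Equiv.Perm ℕ → R) :=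
  (l.map (fun c => hh (c.1 + c.2) (t c))).prod

lemma opL_append (t : ℕ × ℕ → R) (l l' : List (ℕ × ℕ)) :
    opL t (l ++ l') = opL t l * opL t l' := by simp [opL]

/-- a row of cells -/
def rowL (i m : ℕ) : List (ℕ × ℕ) := (List.range m).map (fun j => (i, j))

/-- triangle of cells, in sweep order -/
def triL : ℕ → ℕ → List (ℕ × ℕ)
  | _, 0 => []
  | i, m+1 => triL (i+1) m ++ rowL i m

lemma mem_rowL (i m : ℕ) (c : ℕ × ℕ) : c ∈ rowL i m ↔ c.1 = i ∧ c.2 < m := by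
  rcases c with ⟨a, b⟩
  simp only [rowL, List.mem_map, List.mem_range, Prod.mk.injEq]
  constructor
  · rintro ⟨j, h, rfl, rfl⟩; exact ⟨rfl, h⟩
  · rintro ⟨rfl, h⟩; exact ⟨b, h, rfl, rfl⟩

lemma mem_triL : ∀ (m i : ℕ) (c : ℕ × ℕ), c ∈ triL i m ↔ i ≤ c.1 ∧ c.1 + c.2 + 2 ≤ i + m := by
  intro m
  induction m with
  | zero => intro i c; simp [triL]; omega
  | succ m ih =>
    intro i c
    simp only [triL, List.mem_append, ih, mem_rowL]
    omega

lemma nodup_rowL (i m : ℕ) : (rowL i m).Nodup := by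
  apply List.Nodup.map _ List.nodup_range
  intro a b h; simpa using h

lemma nodup_triL : ∀ (m i : ℕ), (triL i m).Nodup := by
  intro m
  induction m with
  | zero => intro i; simp [triL]
  | succ m ih =>
    intro i
    rw [triL, List.nodup_append]
    refine ⟨ih _, nodup_rowL _ _, ?_⟩
    intro a ha b hb hab
    subst hab
    rw [mem_triL] at ha
    rw [mem_rowL] at hb
    omega

lemma opL_row (X Y : ℕ → R) (i : ℕ) : ∀ (m k : ℕ) (s : ℕ), k = i + s →
    ((List.range m).map (fun j => hh (i + (s + j)) (X i - Y (s + j)))).prod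
      = RowOp k m (X i) (fun j => Y (s + j)) := by
  intro m
  induction m with
  | zero => intro k s _; simp [RowOp]
  | succ m ih =>
    intro k s h
    rw [RowOp, List.range_succ_eq_map, List.map_cons, List.prod_cons, List.map_map, h]
    congr 1
    have := ih (i + s + 1) (s+1) (by omega)
    rw [show (fun j => Y (s + (j + 1))) = fun j => Y (s + 1 + j) by
      funext j; congr 1; omega, ← this]
    congr 2
    funext j
    simp only [Function.comp]
    congr 2
    · omega
    · congr 1; omega

lemma opL_rowL (X Y : ℕ → R) (i m : ℕ) :
    opL (fun c => X c.1 - Y c.2) (rowL i m) = RowOp i m (X i) Y := by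
  have := opL_row X Y i m i 0 rfl
  simp only [zero_add] at this
  rw [← this, opL, rowL, List.map_map]
  rfl

lemma opL_comm (t : ℕ × ℕ → R) (k : ℕ) (a : R) : ∀ l : List (ℕ × ℕ),
    (∀ c ∈ l, k + 2 ≤ c.1 + c.2) → hh k a * opL t l = opL t l * hh k a := by
  intro l
  induction l with
  | nil => intro _; simp [opL]
  | cons c l ih =>
    intro h
    have h1 := ih (fun c hc => h c (by simp [hc]))
    have h2 := h c (by simp)
    simp only [opL, List.map_cons, List.prod_cons] at h1 ⊢
    rw [← mul_assoc, hh_comm k _ h2, mul_assoc, h1, mul_assoc]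

lemma opL_congr (t t' : ℕ × ℕ → R) (l : List (ℕ × ℕ)) (h : ∀ c ∈ l, t c = t' c) :
    opL t l = opL t' l := by
  unfold opL
  congr 1
  apply List.map_congr_left
  intro c hc
  rw [h c hc]

lemma opL_tri (X Y : ℕ → R) (k : ℕ) : ∀ (m i : ℕ), i ≤ k → k + 1 < i + m →
    opL (fun c => X (sN k c.1) - Y c.2) (triL i m)
      = hh k (X (k+1) - X k) * opL (fun c => X c.1 - Y c.2) (triL i m) := by
  intro m
  induction m with
  | zero => intro i h1 h2; omega
  | succ m ih =>
    intro i h1 h2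
    rcases Nat.lt_or_ge i k with h | h
    · rw [triL, opL_append, opL_append, ih (i+1) (by omega) (by omega), mul_assoc]
      congr 2
      apply opL_congr
      intro c hc
      rw [mem_rowL] at hc
      rw [sN_ne k c.1 (by omega) (by omega)]
    · obtain rfl : i = k := by omega
      obtain ⟨m, rfl⟩ : ∃ m', m = m' + 1 := ⟨m - 1, by omega⟩
      rw [triL, triL]
      simp only [opL_append]
      have e1 := opL_rowL (fun a => X (sN i a)) Y
      have e2 := opL_rowL X Y
      simp only [e1, e2, sN_left, sN_right]
      rw [mul_assoc, ← RowOp_swap (X i) (X (i+1)), ← mul_assoc, ← mul_assoc, ← mul_assoc,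
        ← mul_assoc, opL_comm]
      · congr 3
        apply opL_congr
        intro c hc
        rw [mem_triL] at hc
        rw [sN_ne i c.1 (by omega) (by omega)]
      · intro c hc
        rw [mem_triL] at hc
        omega

/-- delta function at the identity -/
noncomputable def del : Equiv.Perm ℕ → R := fun v => if v = 1 then 1 else 0

lemma opL_cons_apply (t : ℕ × ℕ → R) (c : ℕ × ℕ) (l : List (ℕ × ℕ)) (F : Equiv.Perm ℕ → R)
    (v : Equiv.Perm ℕ) :
    opL t (c :: l) F v = opL t l F v +
      t c * (if v (c.1+c.2+1) < v (c.1+c.2) then opL t l F (v * sN (c.1+c.2)) else 0) := by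
  simp [opL, hh, U_apply, LinearMap.add_apply]

lemma opL_map (φ : R →+* R) (t : ℕ × ℕ → R) (l : List (ℕ × ℕ)) : ∀ (v : Equiv.Perm ℕ),
    φ (opL t l del v) = opL (fun c => φ (t c)) l del v := by
  induction l with
  | nil => intro v; by_cases h : v = 1 <;> simp [opL, del, h]
  | cons c l ih =>
    intro v
    rw [opL_cons_apply, opL_cons_apply, map_add, map_mul, ih]
    congr 2
    split_ifs
    · rw [ih]
    · simp

end Alg
/-! ### Part B: expansion over subsets -/

section Exp
variable {R : Type*} [CommRing R]

/-- factor of a cell -/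
noncomputable def gf (D : Finset (ℕ × ℕ)) (c : ℕ × ℕ) : Equiv.Perm ℕ :=
  if c ∈ D then sN (c.1 + c.2) else 1

/-- ordered product -/
noncomputable def piL (D : Finset (ℕ × ℕ)) (l : List (ℕ × ℕ)) : Equiv.Perm ℕ :=
  (l.map (gf D)).prod

lemma piL_append (D : Finset (ℕ × ℕ)) (l l' : List (ℕ × ℕ)) :
    piL D (l ++ l') = piL D l * piL D l' := by simp [piL]

lemma piL_cons (D : Finset (ℕ × ℕ)) (c : ℕ × ℕ) (l : List (ℕ × ℕ)) :
    piL D (c :: l) = gf D c * piL D l := by simp [piL]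

lemma piL_one (D : Finset (ℕ × ℕ)) (l : List (ℕ × ℕ)) (h : ∀ c ∈ l, c ∉ D) : piL D l = 1 := by
  unfold piL
  apply List.prod_eq_one
  intro x hx
  rw [List.mem_map] at hx
  obtain ⟨c, hc, rfl⟩ := hx
  simp [gf, h c hc]

lemma piL_congr (D D' : Finset (ℕ × ℕ)) (l : List (ℕ × ℕ)) (h : ∀ c ∈ l, c ∈ D ↔ c ∈ D') :
    piL D l = piL D' l := by
  unfold piL
  congr 1
  apply List.map_congr_left
  intro c hc
  simp [gf, h c hc]

/-- number of inversions on `[0,n)` -/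
def ell (n : ℕ) (v : Equiv.Perm ℕ) : ℕ :=
  ((Finset.range n ×ˢ Finset.range n).filter (fun p => p.1 < p.2 ∧ v p.2 < v p.1)).card

lemma ell_one (n : ℕ) : ell n 1 = 0 := by
  rw [ell, Finset.card_eq_zero, Finset.filter_eq_empty_iff]
  rintro p -
  simp only [Equiv.Perm.one_apply]
  omega

lemma sN_lt (k a b : ℕ) (h : a < b) (h' : ¬ (a = k ∧ b = k+1)) : sN k a < sN k b := by
  rw [sN_apply, sN_apply]
  split_ifs <;> omega

lemma sN_sN (k a : ℕ) : sN k (sN k a) = a := by simp [sN]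

lemma sN_bd (n k a : ℕ) (h : k + 1 < n) (ha : a < n) : sN k a < n := by
  rw [sN_apply]
  split_ifs <;> omega

lemma ell_desc (n k : ℕ) (hk : k + 1 < n) (v : Equiv.Perm ℕ) (h : v (k+1) < v k) :
    ell n (v * sN k) + 1 = ell n v := by
  have hm : (k, k+1) ∈ (Finset.range n ×ˢ Finset.range n).filter
      (fun p => p.1 < p.2 ∧ v p.2 < v p.1) := by
    simp only [Finset.mem_filter, Finset.mem_product, Finset.mem_range]
    exact ⟨⟨by omega, hk⟩, by omega, h⟩
  unfold ell
  rw [← Finset.card_erase_add_one hm]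
  congr 1
  apply Finset.card_nbij' (fun p => (sN k p.1, sN k p.2)) (fun p => (sN k p.1, sN k p.2))
  · rintro ⟨a, b⟩ hp
    simp only [Finset.mem_coe, Finset.mem_filter, Finset.mem_product, Finset.mem_range,
      Finset.mem_erase, ne_eq, Prod.mk.injEq] at hp ⊢
    simp only [Equiv.Perm.mul_apply] at hp ⊢
    obtain ⟨⟨h1, h2⟩, h3, h4⟩ := hp
    have hne : ¬ (a = k ∧ b = k+1) := by
      rintro ⟨rfl, rfl⟩
      rw [sN_left, sN_right] at h4; omega
    refine ⟨?_, ⟨sN_bd n k a hk h1, sN_bd n k b hk h2⟩, sN_lt k a b h3 hne, h4⟩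
    rintro ⟨e1, e2⟩
    have := sN_lt k a b h3 hne
    have e3 := congrArg (sN k) e1
    have e4 := congrArg (sN k) e2
    rw [sN_sN, sN_left] at e3
    rw [sN_sN, sN_right] at e4
    omega
  · rintro ⟨a, b⟩ hp
    simp only [Finset.mem_coe, Finset.mem_filter, Finset.mem_product, Finset.mem_range,
      Finset.mem_erase, ne_eq, Prod.mk.injEq] at hp ⊢
    simp only [Equiv.Perm.mul_apply] at hp ⊢
    obtain ⟨hne, ⟨h1, h2⟩, h3, h4⟩ := hp
    rw [sN_sN, sN_sN]
    exact ⟨⟨sN_bd n k a hk h1, sN_bd n k b hk h2⟩, sN_lt k a b h3 hne, h4⟩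
  · rintro ⟨a, b⟩ _; simp [sN_sN]
  · rintro ⟨a, b⟩ _; simp [sN_sN]

lemma ell_asc (n k : ℕ) (hk : k + 1 < n) (v : Equiv.Perm ℕ) (h : ¬ v (k+1) < v k) :
    ell n (v * sN k) = ell n v + 1 := by
  have hne : v (k+1) ≠ v k := fun e => by simpa using v.injective e
  have := ell_desc n k hk (v * sN k) (by
    simp only [Equiv.Perm.mul_apply, sN_left, sN_right]; omega)
  rw [mul_assoc, sN_mul, mul_one] at this
  exact this.symm

lemma ell_piL (n : ℕ) (D : Finset (ℕ × ℕ)) : ∀ l : List (ℕ × ℕ),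
    (∀ c ∈ l, c.1 + c.2 + 1 < n) →
    ell n (piL D l)⁻¹ ≤ (l.filter (fun c => c ∈ D)).length := by
  intro l
  induction l with
  | nil => intro _; simp [piL, ell_one]
  | cons c l ih =>
    intro h
    have ih' := ih (fun c hc => h c (by simp [hc]))
    have hc := h c (by simp)
    rw [piL_cons, mul_inv_rev]
    by_cases hD : c ∈ D
    · have e : (gf D c)⁻¹ = sN (c.1 + c.2) := by simp [gf, hD, sN_inv]
      rw [e, List.filter_cons_of_pos (by simpa using hD), List.length_cons]
      by_cases hd : (piL D l)⁻¹ (c.1+c.2+1) < (piL D l)⁻¹ (c.1+c.2)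
      · have := ell_desc n _ hc _ hd
        omega
      · have := ell_asc n _ hc _ hd
        omega
    · have e : (gf D c)⁻¹ = 1 := by simp [gf, hD]
      rw [e, mul_one, List.filter_cons_of_neg (by simpa using hD)]
      exact ih'

lemma ell_piL_card (n : ℕ) (D : Finset (ℕ × ℕ)) (l : List (ℕ × ℕ)) (hl : l.Nodup)
    (h : ∀ c ∈ l, c.1 + c.2 + 1 < n) : ell n (piL D l)⁻¹ ≤ D.card := by
  refine (ell_piL n D l h).trans ?_
  rw [← List.toFinset_card_of_nodup (hl.filter _)]
  apply Finset.card_le_card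
  intro c hc
  simp at hc
  exact hc.2

lemma opL_expand (n : ℕ) (t : ℕ × ℕ → R) : ∀ l : List (ℕ × ℕ), l.Nodup →
    (∀ c ∈ l, c.1 + c.2 + 1 < n) → ∀ v : Equiv.Perm ℕ,
    opL t l del v = ∑ D ∈ l.toFinset.powerset,
      if (piL D l)⁻¹ = v ∧ D.card = ell n v then ∏ c ∈ D, t c else 0 := by
  intro l
  induction l with
  | nil =>
    intro _ _ v
    by_cases h : v = 1
    · subst h; simp [opL, del, piL, ell_one]
    · have h' : ¬ (1 = v) := fun e => h e.symm
      simp [opL, del, piL, h, h']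
  | cons c l ih =>
    intro hnd hb v
    have hnd' := (List.nodup_cons.mp hnd)
    have hb' : ∀ c ∈ l, c.1 + c.2 + 1 < n := fun c hc => hb c (by simp [hc])
    have hc := hb c (by simp)
    have IH := ih hnd'.2 hb'
    have hcl : c ∉ l.toFinset := by simpa using hnd'.1
    rw [opL_cons_apply, List.toFinset_cons, Finset.sum_powerset_insert hcl]
    congr 1
    · rw [IH]
      apply Finset.sum_congr rfl
      intro D hD
      have hcD : c ∉ D := fun h => hcl (Finset.mem_powerset.mp hD h)
      have : gf D c = 1 := by simp [gf, hcD]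
      rw [piL_cons, this, one_mul]
    · have key : ∀ D ∈ l.toFinset.powerset,
          (if (piL (insert c D) (c :: l))⁻¹ = v ∧ (insert c D).card = ell n v
            then ∏ c ∈ insert c D, t c else 0)
          = t c * (if v (c.1+c.2+1) < v (c.1+c.2) then
              (if (piL D l)⁻¹ = v * sN (c.1+c.2) ∧ D.card = ell n (v * sN (c.1+c.2))
                then ∏ c ∈ D, t c else 0) else 0) := by
        intro D hD
        have hcD : c ∉ D := fun h => hcl (Finset.mem_powerset.mp hD h)
        have e1 : gf (insert c D) c = sN (c.1+c.2) := by simp [gf]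
        have e2 : piL (insert c D) l = piL D l := by
          apply piL_congr
          intro a ha
          have : a ≠ c := fun e => hnd'.1 (e ▸ ha)
          simp [this]
        have e3 : (piL D l)⁻¹ * sN (c.1+c.2) = v ↔ (piL D l)⁻¹ = v * sN (c.1+c.2) := by
          constructor
          · rintro rfl; rw [mul_assoc, sN_mul, mul_one]
          · intro e; rw [e, mul_assoc, sN_mul, mul_one]
        rw [piL_cons, mul_inv_rev, e1, e2, sN_inv, e3, Finset.card_insert_of_notMem hcD,
          Finset.prod_insert hcD]
        have hle := ell_piL_card n D l hnd'.2 hb'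
        by_cases hd : v (c.1+c.2+1) < v (c.1+c.2)
        · have hl := ell_desc n _ hc v hd
          have : D.card + 1 = ell n v ↔ D.card = ell n (v * sN (c.1+c.2)) := by omega
          simp only [if_pos hd, this, mul_ite, mul_zero]
        · have hl := ell_asc n _ hc v hd
          rw [if_neg hd, mul_zero, if_neg]
          rintro ⟨h1, h2⟩
          rw [h1] at hle
          omega
      rw [Finset.sum_congr rfl key, ← Finset.mul_sum]
      congr 1
      split_ifs
      · rw [IH]
      · simp
end Exp
/-! ### Part C: states of the sweep -/

section Sweep

/-- full grid rows `i, …, i+m-1`, in sweep order -/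
def grL (n : ℕ) : ℕ → ℕ → List (ℕ × ℕ)
  | _, 0 => []
  | i, m+1 => grL n (i+1) m ++ rowL i n

/-- state after the rows `≥ i` are swept -/
noncomputable def stH (D : Finset (ℕ × ℕ)) (n i : ℕ) : Equiv.Perm ℕ := piL D (grL n i (n - i))

/-- state before the cell `(i,j)` is swept -/
noncomputable def st (D : Finset (ℕ × ℕ)) (n i j : ℕ) : Equiv.Perm ℕ :=
  stH D n (i+1) * piL D (rowL i j)

lemma rowL_succ (i j : ℕ) : rowL i (j+1) = rowL i j ++ [(i, j)] := by
  simp [rowL, List.range_succ]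

lemma piL_rowL_succ (D : Finset (ℕ × ℕ)) (i j : ℕ) :
    piL D (rowL i (j+1)) = piL D (rowL i j) * gf D (i, j) := by
  rw [rowL_succ, piL_append]; simp [piL]

lemma gf_ne (D : Finset (ℕ × ℕ)) (i j a : ℕ) (h1 : a ≠ i + j) (h2 : a ≠ i + j + 1) :
    gf D (i, j) a = a := by
  unfold gf
  split_ifs
  · exact sN_ne _ _ h1 h2
  · rfl

lemma piL_row_fix (D : Finset (ℕ × ℕ)) (i a : ℕ) : ∀ j, (a < i ∨ i + j < a) →
    piL D (rowL i j) a = a := by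
  intro j
  induction j with
  | zero => intro _; simp [piL, rowL]
  | succ j ih =>
    intro h
    rw [piL_rowL_succ, Equiv.Perm.mul_apply, gf_ne _ _ _ _ (by omega) (by omega), ih (by omega)]

lemma piL_row_stable (D : Finset (ℕ × ℕ)) (i a j j' : ℕ) (h : j ≤ j') (ha : a < i + j) :
    piL D (rowL i j') a = piL D (rowL i j) a := by
  induction j', h using Nat.le_induction with
  | base => rfl
  | succ k hk ih =>
    rw [piL_rowL_succ, Equiv.Perm.mul_apply, gf_ne _ _ _ _ (by omega) (by omega), ih]

lemma piL_gr_fix (D : Finset (ℕ × ℕ)) (n : ℕ) : ∀ m i a, a < i → piL D (grL n i m) a = a := by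
  intro m
  induction m with
  | zero => intro i a _; simp [piL, grL]
  | succ m ih =>
    intro i a h
    rw [grL, piL_append, Equiv.Perm.mul_apply, piL_row_fix _ _ _ _ (Or.inl h),
      ih _ _ (by omega)]

lemma stH_fix (D : Finset (ℕ × ℕ)) (n i a : ℕ) (h : a < i) : stH D n i a = a :=
  piL_gr_fix _ _ _ _ _ h

lemma stH_last (D : Finset (ℕ × ℕ)) (n : ℕ) : stH D n n = 1 := by simp [stH, grL, piL]

lemma stH_succ (D : Finset (ℕ × ℕ)) (n i : ℕ) (h : i < n) : stH D n i = st D n i n := by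
  unfold st stH
  rw [show n - i = (n - (i+1)) + 1 by omega, grL, piL_append]

lemma st_zero (D : Finset (ℕ × ℕ)) (n i : ℕ) : st D n i 0 = stH D n (i+1) := by
  simp [st, rowL, piL]

lemma st_succ (D : Finset (ℕ × ℕ)) (n i j : ℕ) :
    st D n i (j+1) = st D n i j * gf D (i, j) := by
  rw [st, piL_rowL_succ, st, mul_assoc]

lemma st_W0 (D : Finset (ℕ × ℕ)) (n i : ℕ) : st D n i 0 i = i := by
  rw [st_zero, stH_fix]; omega

lemma st_S (D : Finset (ℕ × ℕ)) (n i j : ℕ) :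
    st D n i j (i + j + 1) = stH D n (i+1) (i + 1 + j) := by
  rw [st, Equiv.Perm.mul_apply, piL_row_fix _ _ _ _ (Or.inr (by omega))]
  congr 1; omega

lemma st_N (D : Finset (ℕ × ℕ)) (n i j : ℕ) (hi : i < n) (hj : j < n) :
    stH D n i (i + j) = st D n i (j+1) (i + j) := by
  rw [stH_succ _ _ _ hi, st, st, Equiv.Perm.mul_apply, Equiv.Perm.mul_apply,
    piL_row_stable D i (i+j) (j+1) n hj (by omega)]

/-- inversion indicator -/
noncomputable def iv (p q : ℕ) (π : Equiv.Perm ℕ) : ZMod 2 := if π⁻¹ q < π⁻¹ p then 1 else 0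

/-- crossing indicator -/
noncomputable def chi (D : Finset (ℕ × ℕ)) (n p q i j : ℕ) : ZMod 2 :=
  if (i, j) ∈ D ∧ ((st D n i j (i+j) = p ∧ st D n i j (i+j+1) = q) ∨
    (st D n i j (i+j) = q ∧ st D n i j (i+j+1) = p)) then 1 else 0

lemma iv_aux (k a b : ℕ) (hne : a ≠ b) :
    (if sN k b < sN k a then (1 : ZMod 2) else 0) = (if b < a then 1 else 0) +
      if (k = a ∧ k + 1 = b) ∨ (k = b ∧ k + 1 = a) then 1 else 0 := by
  by_cases h1 : k = a ∧ k + 1 = b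
  · obtain ⟨rfl, rfl⟩ := h1
    simp [sN_left, sN_right]
  · by_cases h2 : k = b ∧ k + 1 = a
    · obtain ⟨rfl, rfl⟩ := h2
      simp [sN_left, sN_right]
      decide
    · rw [if_neg (not_or.mpr ⟨h1, h2⟩), add_zero]
      have : sN k b < sN k a ↔ b < a := by
        rw [sN_apply, sN_apply]
        split_ifs <;> omega
      simp only [this]

lemma iv_mul (p q k : ℕ) (hpq : p ≠ q) (π : Equiv.Perm ℕ) :
    iv p q (π * sN k) = iv p q π +
      if (π k = p ∧ π (k+1) = q) ∨ (π k = q ∧ π (k+1) = p) then 1 else 0 := by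
  have e1 : ∀ a b, π a = b ↔ a = π⁻¹ b := by
    intro a b
    constructor
    · rintro rfl; simp
    · rintro rfl; simp
  have := iv_aux k (π⁻¹ p) (π⁻¹ q) (fun e => hpq (π⁻¹.injective e))
  unfold iv
  rw [mul_inv_rev, sN_inv]
  simp only [e1, Equiv.Perm.mul_apply]
  exact this

lemma iv_row (D : Finset (ℕ × ℕ)) (n p q i : ℕ) (hpq : p ≠ q) : ∀ J,
    iv p q (st D n i J) = iv p q (stH D n (i+1)) + ∑ j ∈ Finset.range J, chi D n p q i j := by
  intro J
  induction J with
  | zero => simp [st_zero]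
  | succ J ih =>
    rw [Finset.sum_range_succ, ← add_assoc, ← ih, st_succ]
    unfold gf chi
    by_cases h : (i, J) ∈ D
    · simp only [h, if_true, true_and]
      rw [iv_mul _ _ _ hpq]
    · simp [h]

lemma iv_total (D : Finset (ℕ × ℕ)) (n p q : ℕ) (hpq : p < q) :
    iv p q (stH D n 0) = ∑ i ∈ Finset.range n, ∑ j ∈ Finset.range n, chi D n p q i j := by
  have key : ∀ m i, i + m = n → iv p q (stH D n i) =
      ∑ i' ∈ Finset.Ico i n, ∑ j ∈ Finset.range n, chi D n p q i' j := by
    intro m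
    induction m with
    | zero =>
      intro i h
      obtain rfl : i = n := by omega
      rw [stH_last]
      simp [iv]; omega
    | succ m ih =>
      intro i h
      have hi : i < n := by omega
      rw [Finset.sum_eq_sum_Ico_succ_bot hi, ← ih (i+1) (by omega), stH_succ _ _ _ hi,
        iv_row _ _ _ _ _ hpq.ne, add_comm]
  rw [key n 0 (by omega), Finset.range_eq_Ico]

end Sweep

/-! ### Part D: pipes -/

/-- label of a number -/
def lab (n : ℕ) (k : ℕ) : Option (Fin n) := if h : k < n then some ⟨k, h⟩ else none

lemma lab_eq_some {n k : ℕ} {a : Fin n} : lab n k = some a ↔ k = a := by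
  unfold lab
  split_ifs with h
  · simp [Fin.ext_iff]
  · simp; omega

lemma lab_eq_none {n k : ℕ} : lab n k = none ↔ n ≤ k := by
  unfold lab
  split_ifs with h
  · simp; omega
  · simp; omega

lemma lab_inj {n k l : ℕ} (h : lab n k = lab n l) (hk : k < n) : k = l := by
  have : lab n k = some ⟨k, hk⟩ := by simp [lab, hk]
  rw [this] at h
  exact (lab_eq_some.mp h.symm).symm

/-- the tile is straight -/
def straight : Tile → Prop
  | .cross | .horiz | .vert => True
  | _ => False

lemma loc {d : Pipes n} (hv : IsValid d) (i j : Fin n) :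
    (straight (tile d i j) → Ea d i j = We d i j ∧ No d i j = So d i j) ∧
    (¬ straight (tile d i j) → Ea d i j = So d i j ∧ No d i j = We d i j) := by
  obtain ⟨h1, h2⟩ := hv i j
  simp only [Prod.mk.injEq] at h1
  unfold tile
  rcases hW : We d i j with _ | a <;> rcases hS : So d i j with _ | b <;>
    simp only [hW, hS] at h1 h2 ⊢ <;> simp only [straight] <;>
    (try split_ifs with hh) <;> simp_all

/-- swap set -/
noncomputable def swapSet (d : Pipes n) : Finset (ℕ × ℕ) :=
  (Finset.univ.filter (fun p : Fin n × Fin n => straight (tile d p.1 p.2))).image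
    (fun p => ((p.1 : ℕ), (p.2 : ℕ)))

lemma mem_swapSet (d : Pipes n) (i j : Fin n) :
    ((i : ℕ), (j : ℕ)) ∈ swapSet d ↔ straight (tile d i j) := by
  simp only [swapSet, Finset.mem_image, Finset.mem_filter, Finset.mem_univ, true_and,
    Prod.mk.injEq, Prod.exists]
  constructor
  · rintro ⟨a, b, h, h1, h2⟩
    rw [Fin.ext h1, Fin.ext h2] at h
    exact h
  · intro h; exact ⟨i, j, h, rfl, rfl⟩

/-- basic hypotheses on a filling -/
def Good (d : Pipes n) : Prop :=
  IsValid d ∧ (∀ i : Fin n, d.1 i 0 = some i) ∧ (∀ j : Fin n, d.2 (Fin.last n) j = none)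

lemma key_row {d : Pipes n} (hd : Good d) (i : Fin n)
    (hS : ∀ j : Fin n, So d i j = lab n (stH (swapSet d) n (i+1) (i + 1 + j))) :
    ∀ J (hJ : J < n + 1), d.1 i ⟨J, hJ⟩ = lab n (st (swapSet d) n i J (i + J)) := by
  intro J
  induction J with
  | zero =>
    intro hJ
    rw [add_zero, st_W0]
    exact (hd.2.1 i).trans (lab_eq_some.mpr rfl).symm
  | succ J ih =>
    intro hJ
    have ih' := ih (by omega)
    let j : Fin n := ⟨J, by omega⟩
    have hE : d.1 i ⟨J+1, hJ⟩ = Ea d i j := rfl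
    have hW : d.1 i ⟨J, by omega⟩ = We d i j := rfl
    have hs := hS j
    rw [← st_S] at hs
    have l := loc hd.1 i j
    have hm := mem_swapSet d i j
    rw [hE, st_succ, Equiv.Perm.mul_apply]
    rw [hW] at ih'
    by_cases h : straight (tile d i j)
    · have hg : gf (swapSet d) (i, J) = sN (i + J) := by
        simp only [gf]; rw [if_pos (hm.mpr h)]
      rw [(l.1 h).1, hg, ← add_assoc, sN_right, ih']
    · have hg : gf (swapSet d) (i, J) = 1 := by
        simp only [gf]; rw [if_neg (fun h' => h (hm.mp h'))]
      rw [(l.2 h).1, hg, Equiv.Perm.one_apply, ← add_assoc, hs]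

lemma key_H {d : Pipes n} (hd : Good d) : ∀ m i (h : i + m = n) (j : Fin n),
    d.2 ⟨i, by omega⟩ j = lab n (stH (swapSet d) n i (i + j)) := by
  intro m
  induction m with
  | zero =>
    intro i h j
    obtain rfl : i = n := by omega
    rw [stH_last, Equiv.Perm.one_apply]
    exact (hd.2.2 j).trans (lab_eq_none.mpr (by omega)).symm
  | succ m ih =>
    intro i0 h j
    let i : Fin n := ⟨i0, by omega⟩
    have hS : ∀ j : Fin n, So d i j = lab n (stH (swapSet d) n (i+1) (i + 1 + j)) :=
      fun j => ih (i0+1) (by omega) j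
    have hW := key_row hd i hS j (by omega)
    have hN : d.2 ⟨i0, by omega⟩ j = No d i j := rfl
    have hW' : d.1 i ⟨j, by omega⟩ = We d i j := rfl
    have hs := hS j
    rw [← st_S] at hs
    have l := loc hd.1 i j
    have hm := mem_swapSet d i j
    rw [hN, st_N _ _ _ _ i.2 j.2, st_succ, Equiv.Perm.mul_apply]
    rw [hW'] at hW
    by_cases h : straight (tile d i j)
    · have hg : gf (swapSet d) (i0, j) = sN (i0 + j) := by
        simp only [gf]; rw [if_pos (hm.mpr h)]
      rw [(l.1 h).2, hg, sN_left, hs]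
    · have hg : gf (swapSet d) (i0, j) = 1 := by
        simp only [gf]; rw [if_neg (fun h' => h (hm.mp h'))]
      rw [(l.2 h).2, hg, Equiv.Perm.one_apply, hW]

lemma key2 {d : Pipes n} (hd : Good d) (i : Fin (n+1)) (j : Fin n) :
    d.2 i j = lab n (stH (swapSet d) n i (i + j)) := key_H hd (n - i) i (by omega) j

lemma key1 {d : Pipes n} (hd : Good d) (i : Fin n) (j : Fin (n+1)) :
    d.1 i j = lab n (st (swapSet d) n i j (i + j)) :=
  key_row hd i (fun j => key2 hd i.succ j) j j.2

lemma key_W {d : Pipes n} (hd : Good d) (i j : Fin n) :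
    We d i j = lab n (st (swapSet d) n i j (i + j)) := key1 hd i j.castSucc

lemma key_S {d : Pipes n} (hd : Good d) (i j : Fin n) :
    So d i j = lab n (st (swapSet d) n i j (i + j + 1)) := by
  rw [st_S]; exact key2 hd i.succ j

lemma good_ext {d d' : Pipes n} (hd : Good d) (hd' : Good d') (h : swapSet d = swapSet d') :
    d = d' := by
  apply Prod.ext
  · funext i j; rw [key1 hd, key1 hd', h]
  · funext i j; rw [key2 hd, key2 hd', h]

lemma good_of {w : Equiv.Perm (Fin n)} {d : Pipes n} (h : IsGPDof w d) : Good d :=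
  ⟨h.1, h.2.1, h.2.2.2.1⟩

lemma final_symm {w : Equiv.Perm (Fin n)} {d : Pipes n} (h : IsGPDof w d) (j : Fin n) :
    stH (swapSet d) n 0 j = w.symm j := by
  have h1 := key2 (good_of h) 0 j
  rw [h.2.2.2.2 j] at h1
  have := lab_eq_some.mp h1.symm
  simpa using this

lemma final_inv {w : Equiv.Perm (Fin n)} {d : Pipes n} (h : IsGPDof w d) (p : Fin n) :
    (stH (swapSet d) n 0)⁻¹ p = w p := by
  rw [Equiv.Perm.inv_eq_iff_eq, final_symm h]; simp

lemma tile_cross_iff (d : Pipes n) (i j : Fin n) :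
    tile d i j = .cross ↔ straight (tile d i j) ∧ We d i j ≠ none ∧ So d i j ≠ none := by
  unfold tile
  rcases hW : We d i j with _ | a <;> rcases hS : So d i j with _ | b <;> simp only [] <;>
    (try split_ifs) <;> simp [straight]

lemma crossesAt_iff {d : Pipes n} (hd : Good d) (p q i j : Fin n) :
    CrossesAt d p q i j ↔ (((i : ℕ), (j : ℕ)) ∈ swapSet d ∧
      ((st (swapSet d) n i j (i+j) = p ∧ st (swapSet d) n i j (i+j+1) = q) ∨
       (st (swapSet d) n i j (i+j) = q ∧ st (swapSet d) n i j (i+j+1) = p))) := by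
  unfold CrossesAt
  rw [tile_cross_iff, mem_swapSet]
  simp only [← lab_eq_some]
  rw [← key_W hd, ← key_S hd]
  constructor
  · rintro ⟨⟨h1, -, -⟩, h2⟩; exact ⟨h1, h2⟩
  · rintro ⟨h1, h2⟩
    refine ⟨⟨h1, ?_, ?_⟩, h2⟩ <;> rcases h2 with ⟨h2, h3⟩ | ⟨h2, h3⟩ <;> simp [h2, h3]

lemma cross_parity {w : Equiv.Perm (Fin n)} {d : Pipes n} (h : IsGPDof w d) (p q : Fin n)
    (hpq : p < q) : (crossCount d p q : ZMod 2) = if w q < w p then 1 else 0 := by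
  have h1 := iv_total (swapSet d) n p q hpq
  unfold iv at h1
  rw [final_inv h, final_inv h] at h1
  simp only [Fin.val_fin_lt] at h1
  rw [h1, crossCount, Finset.card_filter, Nat.cast_sum, Finset.sum_range, Fintype.sum_prod_type]
  apply Finset.sum_congr rfl
  intro i _
  rw [Finset.sum_range]
  apply Finset.sum_congr rfl
  intro j _
  unfold chi
  simp only [crossesAt_iff (good_of h)]
  split_ifs <;> simp
/-! ### Part E: counting crossings -/

lemma cross_cell_sum {d : Pipes n} (hv : IsValid d) (i j : Fin n) :
    (∑ p ∈ Finset.univ.filter (fun p : Fin n × Fin n => p.1 < p.2),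
      if CrossesAt d p.1 p.2 i j then 1 else 0) = if tile d i j = .cross then 1 else 0 := by
  by_cases h : tile d i j = .cross
  · rw [if_pos h, ← Finset.card_filter, Finset.card_eq_one]
    obtain ⟨-, h1, h2⟩ := (tile_cross_iff d i j).mp h
    obtain ⟨a, ha⟩ := Option.ne_none_iff_exists'.mp h1
    obtain ⟨b, hb⟩ := Option.ne_none_iff_exists'.mp h2
    have hab : a ≠ b := by
      rintro rfl
      have := (hv i j).2 (by rw [ha, hb])
      simp [ha] at this
    refine ⟨(min a b, max a b), ?_⟩
    ext ⟨p, q⟩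
    simp only [Finset.mem_filter, Finset.mem_univ, true_and, Finset.mem_singleton,
      Prod.mk.injEq, CrossesAt, h, ha, hb, Option.some.injEq]
    rcases lt_or_gt_of_ne hab with hl | hl
    · rw [min_eq_left hl.le, max_eq_right hl.le]
      constructor
      · rintro ⟨h3, ⟨rfl, rfl⟩ | ⟨rfl, rfl⟩⟩
        · exact ⟨rfl, rfl⟩
        · exact absurd h3 (not_lt.mpr hl.le)
      · rintro ⟨rfl, rfl⟩; exact ⟨hl, Or.inl ⟨rfl, rfl⟩⟩
    · rw [min_eq_right hl.le, max_eq_left hl.le]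
      constructor
      · rintro ⟨h3, ⟨rfl, rfl⟩ | ⟨rfl, rfl⟩⟩
        · exact absurd h3 (not_lt.mpr hl.le)
        · exact ⟨rfl, rfl⟩
      · rintro ⟨rfl, rfl⟩; exact ⟨hl, Or.inr ⟨rfl, rfl⟩⟩
  · rw [if_neg h]
    apply Finset.sum_eq_zero
    intro p _
    rw [if_neg]
    intro hc; exact h hc.1

lemma tileCount_cross {d : Pipes n} (hv : IsValid d) :
    tileCount d .cross = ∑ p ∈ Finset.univ.filter (fun p : Fin n × Fin n => p.1 < p.2),
      crossCount d p.1 p.2 := by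
  unfold tileCount crossCount
  simp only [Finset.card_filter]
  rw [Finset.sum_comm]
  apply Finset.sum_congr rfl
  intro c _
  exact (cross_cell_sum hv c.1 c.2).symm

lemma invCount_sum (w : Equiv.Perm (Fin n)) :
    invCount w = ∑ p ∈ Finset.univ.filter (fun p : Fin n × Fin n => p.1 < p.2),
      if w p.2 < w p.1 then 1 else 0 := by
  unfold invCount
  rw [← Finset.card_filter, Finset.filter_filter]

lemma crossCount_ge {w : Equiv.Perm (Fin n)} {d : Pipes n} (h : IsGPDof w d) (p q : Fin n)
    (hpq : p < q) : (if w q < w p then 1 else 0) ≤ crossCount d p q := by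
  have := cross_parity h p q hpq
  split_ifs with h1
  · rw [if_pos h1] at this
    by_contra h2
    have h3 : crossCount d p q = 0 := by omega
    rw [h3] at this
    simp at this
  · omega

lemma crossCount_symm (d : Pipes n) (p q : Fin n) : crossCount d p q = crossCount d q p := by
  unfold crossCount
  congr 1
  apply Finset.filter_congr
  intro c _
  unfold CrossesAt
  rw [or_comm]

lemma crossCount_self {d : Pipes n} (hv : IsValid d) (p : Fin n) : crossCount d p p = 0 := by
  unfold crossCount
  rw [Finset.card_eq_zero, Finset.filter_eq_empty_iff]
  rintro c - ⟨-, h⟩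
  have h' : We d c.1 c.2 = some p ∧ So d c.1 c.2 = some p := by tauto
  have := (hv c.1 c.2).2 (by rw [h'.1, h'.2])
  rw [h'.1] at this
  simp at this

lemma cross_ge {w : Equiv.Perm (Fin n)} {d : Pipes n} (h : IsGPDof w d) :
    invCount w ≤ tileCount d .cross := by
  rw [tileCount_cross h.1, invCount_sum]
  apply Finset.sum_le_sum
  intro p hp
  exact crossCount_ge h _ _ (by simpa using hp)

lemma cross_eq_iff {w : Equiv.Perm (Fin n)} {d : Pipes n} (h : IsGPDof w d) :
    tileCount d .cross = invCount w ↔ NoDoubleCross d := by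
  rw [tileCount_cross h.1, invCount_sum, eq_comm, Finset.sum_eq_sum_iff_of_le]
  · constructor
    · intro H p q
      have key : ∀ p q : Fin n, p < q → crossCount d p q ≤ 1 := by
        intro p q hpq
        have := H (p, q) (by simpa using hpq)
        simp only at this
        rw [← this]
        split_ifs <;> omega
      rcases lt_trichotomy p q with hl | rfl | hl
      · exact key p q hl
      · rw [crossCount_self h.1]; omega
      · rw [crossCount_symm]; exact key q p hl
    · rintro H ⟨p, q⟩ hp
      have hpq : p < q := by simpa using hp
      have h1 := cross_parity h p q hpq
      have h2 := H p q
      have h3 := crossCount_ge h p q hpq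
      simp only
      split_ifs at h1 h3 ⊢
      · omega
      · by_contra h4
        have : crossCount d p q = 1 := by omega
        rw [this] at h1
        simp at h1
  · intro p hp
    exact crossCount_ge h _ _ (by simpa using hp)

lemma loc_noHV {d : Pipes n} (hv : IsValid d) (i j : Fin n)
    (h1 : tile d i j ≠ .horiz) (h2 : tile d i j ≠ .vert) :
    (Ea d i j = none ↔ So d i j = none) := by
  have l := loc hv i j
  by_cases hs : straight (tile d i j)
  · have hc : tile d i j = .cross := by
      cases ht : tile d i j <;> simp_all [straight]
    obtain ⟨-, h3, h4⟩ := (tile_cross_iff d i j).mp hc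
    rw [(l.1 hs).1]
    simp [h3, h4]
  · rw [(l.2 hs).1]

lemma shape_W {w : Equiv.Perm (Fin n)} {d : Pipes n} (h : IsGPDof w d)
    (hh : ∀ i j, tile d i j ≠ .horiz) (hv : ∀ i j, tile d i j ≠ .vert) :
    ∀ J (hJ : J < n + 1) (i : Fin n), d.1 i ⟨J, hJ⟩ = none ↔ n ≤ i + J := by
  intro J
  induction J with
  | zero =>
    intro hJ i
    have : d.1 i ⟨0, hJ⟩ = some i := h.2.1 i
    rw [this]; simp
  | succ J ih =>
    intro hJ i
    let j : Fin n := ⟨J, by omega⟩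
    have e : d.1 i ⟨J+1, hJ⟩ = Ea d i j := rfl
    rw [e, loc_noHV h.1 i j (hh i j) (hv i j)]
    by_cases hi : (i : ℕ) + 1 < n
    · let i' : Fin n := ⟨i+1, hi⟩
      have e2 : So d i j = No d i' j := rfl
      have hN : No d i' j = none ↔ We d i' j = none := by
        have l := loc h.1 i' j
        by_cases hs : straight (tile d i' j)
        · have hc : tile d i' j = .cross := by
            have := hh i' j
            have := hv i' j
            cases ht : tile d i' j <;> simp_all [straight]
          obtain ⟨-, h3, h4⟩ := (tile_cross_iff d i' j).mp hc
          rw [(l.1 hs).2]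
          simp [h3, h4]
        · rw [(l.2 hs).2]
      have e3 : We d i' j = d.1 i' ⟨J, by omega⟩ := rfl
      rw [e2, hN, e3, ih]
      have : (i' : ℕ) = i + 1 := rfl
      omega
    · have e2 : So d i j = d.2 (Fin.last n) j := by
        have hl : i.succ = Fin.last n := by
          apply Fin.ext; rw [Fin.val_succ, Fin.val_last]; omega
        unfold So; rw [hl]
      rw [e2, h.2.2.2.1 j]
      simp; omega

lemma shape {w : Equiv.Perm (Fin n)} {d : Pipes n} (h : IsGPDof w d)
    (hh : ∀ i j, tile d i j ≠ .horiz) (hv : ∀ i j, tile d i j ≠ .vert) :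
    (∀ i j : Fin n, (i : ℕ) + (j : ℕ) + 2 ≤ n → tile d i j = .cross ∨ tile d i j = .bump) ∧
    (∀ i j : Fin n, (i : ℕ) + (j : ℕ) + 2 = n + 1 → tile d i j = .nw) ∧
    (∀ i j : Fin n, (i : ℕ) + (j : ℕ) + 2 > n + 1 → tile d i j = .blank) := by
  have hW : ∀ i j : Fin n, We d i j = none ↔ n ≤ i + j :=
    fun i j => shape_W h hh hv j (by omega) i
  have hS : ∀ i j : Fin n, So d i j = none ↔ n ≤ i + j + 1 := by
    intro i j
    rw [← loc_noHV h.1 i j (hh i j) (hv i j)]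
    exact shape_W h hh hv (j+1) (by omega) i
  refine ⟨?_, ?_, ?_⟩ <;> intro i j hij <;> have h1 := hW i j <;> have h2 := hS i j <;>
    have h3 := hh i j <;> have h4 := hv i j <;> unfold tile at h3 h4 ⊢ <;>
    rcases hW' : We d i j with _ | a <;> rcases hS' : So d i j with _ | b <;>
    simp only [hW', hS', true_iff, false_iff, reduceCtorEq] at h1 h2 h3 h4 ⊢ <;> first
      | omega
      | (split_ifs <;> simp_all)

lemma classic_straight {d : Pipes n} (h : IsClassic d) (i j : Fin n) :
    (straight (tile d i j) ↔ tile d i j = .cross) ∧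
    (tile d i j = .cross → (i : ℕ) + j + 2 ≤ n) := by
  rcases lt_trichotomy ((i : ℕ) + j + 2) (n + 1) with hl | hl | hl
  · rcases h.1 i j (by omega) with e | e
    · simp only [e, straight]; simp; omega
    · simp [e, straight]
  · have e := h.2.1 i j hl
    simp [e, straight]
  · have e := h.2.2.1 i j hl
    simp [e, straight]

/-- number of straight tiles -/
noncomputable def strSet (d : Pipes n) : Finset (Fin n × Fin n) :=
  Finset.univ.filter (fun p : Fin n × Fin n => straight (tile d p.1 p.2))

lemma classic_strSet {d : Pipes n} (h : IsClassic d) :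
    strSet d = Finset.univ.filter (fun p : Fin n × Fin n => tile d p.1 p.2 = .cross) := by
  unfold strSet
  apply Finset.filter_congr
  intro p _
  exact (classic_straight h _ _).1

lemma classic_card {w : Equiv.Perm (Fin n)} {d : Pipes n} (h : IsGPDof w d) (hc : IsClassic d) :
    (strSet d).card = invCount w := by
  rw [classic_strSet hc]
  exact (cross_eq_iff h).mpr hc.2.2.2

lemma nonclassic_card {w : Equiv.Perm (Fin n)} {d : Pipes n} (h : IsGPDof w d)
    (hc : ¬ IsClassic d) : invCount w < (strSet d).card := by
  by_contra hlt
  have hsub : Finset.univ.filter (fun p : Fin n × Fin n => tile d p.1 p.2 = .cross) ⊆ strSet d := by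
    intro p hp
    simp only [Finset.mem_filter, Finset.mem_univ, true_and, strSet] at hp ⊢
    rw [hp]; trivial
  have h1 := cross_ge h
  have h2 : tileCount d .cross ≤ (strSet d).card := Finset.card_le_card hsub
  have heq := Finset.eq_of_subset_of_card_le hsub (by
    change _ ≤ tileCount d .cross
    omega)
  have hall : ∀ i j, straight (tile d i j) → tile d i j = .cross := by
    intro i j hs
    have : (i, j) ∈ strSet d := by simpa [strSet] using hs
    rw [← heq] at this
    simpa using this
  obtain ⟨s1, s2, s3⟩ := shape h
    (fun i j e => by have := hall i j (by rw [e]; trivial); rw [e] at this; cases this)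
    (fun i j e => by have := hall i j (by rw [e]; trivial); rw [e] at this; cases this)
  exact hc ⟨s1, s2, s3, (cross_eq_iff h).mp (by omega)⟩

/-! ### Part F: the leading coefficient -/

/-- cell weight -/
noncomputable def cw (p : Fin n × Fin n) : MvPolynomial (XYA n) ℤ :=
  MvPolynomial.X XYA.A + MvPolynomial.X (XYA.x p.1) - MvPolynomial.X (XYA.y p.2)

/-- weight of a tile -/
noncomputable def tw (p : Fin n × Fin n) : Tile → Polynomial (MvPolynomial (XYA n) ℤ)
  | .cross => Polynomial.C (cw p)
  | .horiz => Polynomial.C (cw p)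
  | .vert => Polynomial.C (cw p)
  | .blank => Polynomial.X - Polynomial.C (MvPolynomial.X (XYA.x p.1) - MvPolynomial.X (XYA.y p.2))
  | .bump => Polynomial.X + Polynomial.C (MvPolynomial.X XYA.A)
  | .nw => Polynomial.X + Polynomial.C (MvPolynomial.X XYA.A)
  | .se => Polynomial.X + Polynomial.C (MvPolynomial.X XYA.A)

lemma tw_monic (p : Fin n × Fin n) (t : Tile) (h : ¬ straight t) :
    (tw p t).Monic ∧ (tw p t).natDegree = 1 := by
  cases t with
  | cross => exact absurd trivial h
  | horiz => exact absurd trivial h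
  | vert => exact absurd trivial h
  | blank => exact ⟨Polynomial.monic_X_sub_C _, Polynomial.natDegree_X_sub_C _⟩
  | bump => exact ⟨Polynomial.monic_X_add_C _, Polynomial.natDegree_X_add_C _⟩
  | nw => exact ⟨Polynomial.monic_X_add_C _, Polynomial.natDegree_X_add_C _⟩
  | se => exact ⟨Polynomial.monic_X_add_C _, Polynomial.natDegree_X_add_C _⟩

lemma tw_straight (p : Fin n × Fin n) (t : Tile) (h : straight t) :
    tw p t = Polynomial.C (cw p) := by
  cases t <;> first | rfl | exact h.elim

lemma wtB_eq (d : Pipes n) : wtB d = ∏ p : Fin n × Fin n, tw p (tile d p.1 p.2) := by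
  rw [Fintype.prod_prod_type]
  unfold wtB
  apply Finset.prod_congr rfl
  intro i _
  apply Finset.prod_congr rfl
  intro j _
  cases tile d i j <;> rfl

lemma wtB_split (d : Pipes n) : ∃ M : Polynomial (MvPolynomial (XYA n) ℤ),
    M.Monic ∧ M.natDegree = n^2 - (strSet d).card ∧
    wtB d = Polynomial.C (∏ p ∈ strSet d, cw p) * M := by
  have hM : ∀ p ∈ (strSet d)ᶜ, (tw p (tile d p.1 p.2)).Monic ∧
      (tw p (tile d p.1 p.2)).natDegree = 1 := by
    intro p hp
    exact tw_monic _ _ (by simpa [strSet] using hp)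
  refine ⟨∏ p ∈ (strSet d)ᶜ, tw p (tile d p.1 p.2),
    Polynomial.monic_prod_of_monic _ _ (fun p hp => (hM p hp).1), ?_, ?_⟩
  · rw [Polynomial.natDegree_prod_of_monic _ _ (fun p hp => (hM p hp).1),
      Finset.sum_congr rfl (fun p hp => (hM p hp).2)]
    simp [Finset.card_compl, sq]
  · rw [wtB_eq, ← Finset.prod_mul_prod_compl (strSet d), map_prod]
    congr 1
    apply Finset.prod_congr rfl
    intro p hp
    exact tw_straight _ _ (by simpa [strSet] using hp)

lemma strSet_card_le (d : Pipes n) : (strSet d).card ≤ n^2 := by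
  have := Finset.card_le_univ (strSet d)
  simpa [sq] using this

lemma coeff_wtB {w : Equiv.Perm (Fin n)} {d : Pipes n} (h : IsGPDof w d) :
    (wtB d).coeff (n^2 - invCount w) = if IsClassic d then
      ∏ p ∈ Finset.univ.filter (fun p : Fin n × Fin n => tile d p.1 p.2 = .cross), cw p else 0 := by
  obtain ⟨M, h1, h2, h3⟩ := wtB_split d
  rw [h3, Polynomial.coeff_C_mul]
  split_ifs with hc
  · rw [← classic_card h hc, ← h2, h1.coeff_natDegree, mul_one, classic_strSet hc]
  · have := nonclassic_card h hc
    have := strSet_card_le d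
    rw [Polynomial.coeff_eq_zero_of_natDegree_lt, mul_zero]
    omega

lemma coeff_GB (w : Equiv.Perm (Fin n)) : (GB w).coeff (n^2 - invCount w) =
    ∑ d ∈ Finset.univ.filter (fun d : Pipes n => IsGPDof w d ∧ IsClassic d),
      ∏ p ∈ Finset.univ.filter (fun p : Fin n × Fin n => tile d p.1 p.2 = .cross), cw p := by
  rw [GB, Polynomial.finsetSum_coeff, ← Finset.filter_filter, Finset.sum_filter IsClassic]
  apply Finset.sum_congr rfl
  intro d hd
  exact coeff_wtB (by simpa using hd)
/-! ### Part E: the bijection -/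

/-- extension of a permutation to `ℕ` -/
noncomputable def iota (w : Equiv.Perm (Fin n)) : Equiv.Perm ℕ :=
  w.viaEmbedding Fin.valEmbedding

lemma iota_val (w : Equiv.Perm (Fin n)) (i : Fin n) : iota w (i : ℕ) = (w i : ℕ) :=
  w.viaEmbedding_apply Fin.valEmbedding i

lemma iota_ge (w : Equiv.Perm (Fin n)) (a : ℕ) (h : n ≤ a) : iota w a = a := by
  apply w.viaEmbedding_apply_of_notMem Fin.valEmbedding
  rintro ⟨i, rfl⟩
  have := i.2
  simp at h
  omega

lemma iota_ext (w : Equiv.Perm (Fin n)) (v : Equiv.Perm ℕ) (h1 : ∀ i : Fin n, v i = w i)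
    (h2 : ∀ a, n ≤ a → v a = a) : v = iota w := by
  ext a
  by_cases h : a < n
  · rw [h1 ⟨a, h⟩, ← iota_val]
  · rw [h2 a (by omega), iota_ge _ _ (by omega)]

lemma iota_adj (w : Equiv.Perm (Fin n)) (i : Fin n) (hi : (i : ℕ) + 1 < n) :
    iota (w * adjSwap i hi) = iota w * sN i := by
  symm
  apply iota_ext
  · intro k
    rw [Equiv.Perm.mul_apply, Equiv.Perm.mul_apply, ← iota_val]
    congr 1
    rw [sN_apply, adjSwap, Equiv.swap_apply_def]
    simp only [Fin.ext_iff]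
    split_ifs <;> simp_all
  · intro a ha
    rw [Equiv.Perm.mul_apply, sN_ne _ _ (by omega) (by omega), iota_ge _ _ ha]

lemma ell_iota (w : Equiv.Perm (Fin n)) : ell n (iota w) = invCount w := by
  unfold ell invCount
  symm
  apply Finset.card_bij (fun p _ => ((p.1 : ℕ), (p.2 : ℕ)))
  · rintro ⟨p, q⟩ h
    simp only [Finset.mem_filter, Finset.mem_univ, true_and, Finset.mem_product,
      Finset.mem_range, iota_val] at h ⊢
    exact ⟨⟨p.2, q.2⟩, h.1, h.2⟩
  · rintro ⟨p, q⟩ _ ⟨p', q'⟩ _ h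
    simp only [Prod.mk.injEq] at h
    rw [Fin.ext h.1, Fin.ext h.2]
  · rintro ⟨p, q⟩ h
    simp only [Finset.mem_filter, Finset.mem_product, Finset.mem_range] at h
    refine ⟨(⟨p, h.1.1⟩, ⟨q, h.1.2⟩), ?_, rfl⟩
    simp only [Finset.mem_filter, Finset.mem_univ, true_and, Fin.lt_def, ← iota_val]
    exact h.2

/-- the triangle -/
def InTri (n : ℕ) (D : Finset (ℕ × ℕ)) : Prop := ∀ c ∈ D, c.1 + c.2 + 2 ≤ n

lemma piL_ge {D : Finset (ℕ × ℕ)} (hD : InTri n D) (a : ℕ) (ha : n ≤ a) :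
    ∀ l : List (ℕ × ℕ), piL D l a = a := by
  intro l
  induction l with
  | nil => simp [piL]
  | cons c l ih =>
    rw [piL_cons, Equiv.Perm.mul_apply, ih]
    unfold gf
    split_ifs with h
    · have := hD c h
      exact sN_ne _ _ (by omega) (by omega)
    · rfl

lemma piL_rowL_stop {D : Finset (ℕ × ℕ)} (hD : InTri n D) (i m : ℕ) (h : i + m + 1 = n) :
    ∀ k, m ≤ k → piL D (rowL i k) = piL D (rowL i m) := by
  intro k hk
  induction k, hk using Nat.le_induction with
  | base => rfl
  | succ k hk ih =>
    rw [piL_rowL_succ, ih]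
    have : (i, k) ∉ D := fun hh => by have := hD _ hh; simp at this; omega
    simp [gf, this]

lemma tri_gr {D : Finset (ℕ × ℕ)} (hD : InTri n D) : ∀ m i, i + m = n →
    piL D (triL i m) = piL D (grL n i m) := by
  intro m
  induction m with
  | zero => intro i _; rfl
  | succ m ih =>
    intro i h
    rw [triL, grL, piL_append, piL_append, ih (i+1) (by omega),
      piL_rowL_stop hD i m (by omega) n (by omega)]

lemma tri_stH {D : Finset (ℕ × ℕ)} (hD : InTri n D) : piL D (triL 0 n) = stH D n 0 := by
  rw [tri_gr hD n 0 (by omega)]; rfl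

lemma final_iota {w : Equiv.Perm (Fin n)} {d : Pipes n} (h : IsGPDof w d)
    (hD : InTri n (swapSet d)) : (piL (swapSet d) (triL 0 n))⁻¹ = iota w := by
  apply iota_ext
  · intro i
    rw [tri_stH hD]; exact final_inv h i
  · intro a ha
    rw [Equiv.Perm.inv_eq_iff_eq, piL_ge hD a ha]

lemma classic_inTri {d : Pipes n} (hc : IsClassic d) : InTri n (swapSet d) := by
  intro c h
  simp only [swapSet, Finset.mem_image, Finset.mem_filter, Finset.mem_univ, true_and] at h
  obtain ⟨p, h1, rfl⟩ := h
  have := classic_straight hc p.1 p.2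
  exact this.2 (this.1.mp h1)

lemma swapSet_eq (d : Pipes n) :
    swapSet d = (strSet d).image (fun p => ((p.1 : ℕ), (p.2 : ℕ))) := rfl

lemma pair_inj : Function.Injective (fun p : Fin n × Fin n => ((p.1 : ℕ), (p.2 : ℕ))) := by
  rintro ⟨p, q⟩ ⟨p', q'⟩ h
  simp only [Prod.mk.injEq] at h
  rw [Fin.ext h.1, Fin.ext h.2]

/-! inverse map -/

/-- filling attached to a set of cells -/
noncomputable def mk (n : ℕ) (D : Finset (ℕ × ℕ)) : Pipes n :=
  (fun i j => lab n (st D n i j (i + j)), fun i j => lab n (stH D n i (i + j)))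

lemma mk_W (D : Finset (ℕ × ℕ)) (i j : Fin n) :
    We (mk n D) i j = lab n (st D n i j (i + j)) := rfl

lemma mk_S (D : Finset (ℕ × ℕ)) (i j : Fin n) :
    So (mk n D) i j = lab n (st D n i j (i + j + 1)) := by
  rw [st_S]; rfl

lemma mk_E (D : Finset (ℕ × ℕ)) (i j : Fin n) :
    Ea (mk n D) i j = lab n (st D n i j (gf D (i, j) (i + j + 1))) := by
  rw [← Equiv.Perm.mul_apply, ← st_succ]; rfl

lemma mk_N (D : Finset (ℕ × ℕ)) (i j : Fin n) :
    No (mk n D) i j = lab n (st D n i j (gf D (i, j) (i + j))) := by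
  rw [← Equiv.Perm.mul_apply, ← st_succ, ← st_N _ _ _ _ i.2 j.2]; rfl

lemma mk_valid (D : Finset (ℕ × ℕ)) : IsValid (mk n D) := by
  intro i j
  rw [mk_W, mk_S, mk_E, mk_N]
  constructor
  · unfold gf
    split_ifs with h
    · left; rw [sN_left, sN_right]
    · right; rfl
  · intro h
    by_contra hne
    rw [lab_eq_none, not_le] at hne
    have := (st D n i j).injective (lab_inj h hne)
    omega

lemma st_ge {D : Finset (ℕ × ℕ)} (hD : InTri n D) (i j a : ℕ) (ha : n ≤ a) :
    st D n i j a = a := by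
  rw [st, Equiv.Perm.mul_apply, piL_ge hD a ha, stH, piL_ge hD a ha]

lemma st_lt {D : Finset (ℕ × ℕ)} (hD : InTri n D) (i j a : ℕ) (ha : a < n) :
    st D n i j a < n := by
  by_contra h
  have h1 := st_ge hD i j (st D n i j a) (by omega)
  have := (st D n i j).injective h1
  omega

lemma mk_gpd {D : Finset (ℕ × ℕ)} (hD : InTri n D) {w : Equiv.Perm (Fin n)}
    (hw : (piL D (triL 0 n))⁻¹ = iota w) : IsGPDof w (mk n D) := by
  refine ⟨mk_valid D, ?_, ?_, ?_, ?_⟩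
  · intro i
    change lab n (st D n i 0 (i + 0)) = some i
    rw [add_zero, st_W0, lab_eq_some]
  · intro i
    change lab n (st D n i n (i + n)) = none
    rw [st_ge hD _ _ _ (by omega), lab_eq_none]; omega
  · intro j
    change lab n (stH D n n (n + j)) = none
    rw [stH_last, lab_eq_none]; simp
  · intro j
    change lab n (stH D n 0 (0 + j)) = some (w.symm j)
    rw [lab_eq_some, zero_add, ← tri_stH hD]
    have : piL D (triL 0 n) = (iota w)⁻¹ := by rw [← hw, inv_inv]
    rw [this, Equiv.Perm.inv_eq_iff_eq, iota_val]; simp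

lemma mk_tile {D : Finset (ℕ × ℕ)} (hD : InTri n D) (i j : Fin n) :
    tile (mk n D) i j = if (i : ℕ) + j + 2 ≤ n then
      (if ((i : ℕ), (j : ℕ)) ∈ D then .cross else .bump) else
      (if (i : ℕ) + j + 2 = n + 1 then .nw else .blank) := by
  have hW := mk_W D i j
  have hS := mk_S D i j
  have hE := mk_E D i j
  have hN := mk_N D i j
  have hlab : ∀ k (h : k < n), lab n k = some ⟨k, h⟩ := fun k h => lab_eq_some.mpr rfl
  have hne : st D n i j (i + j) ≠ st D n i j (i + j + 1) := fun e => by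
    have := (st D n i j).injective e
    omega
  by_cases h1 : (i : ℕ) + j + 2 ≤ n
  · rw [if_pos h1]
    rw [hlab _ (st_lt hD _ _ _ (by omega))] at hW hS
    unfold tile
    rw [hW, hS, hE]
    simp only []
    by_cases h2 : ((i : ℕ), (j : ℕ)) ∈ D
    · rw [if_pos h2, if_pos]
      unfold gf
      rw [if_pos h2, sN_right, lab_eq_some]
    · rw [if_neg h2, if_neg]
      unfold gf
      rw [if_neg h2, lab_eq_some, Equiv.Perm.one_apply]
      exact hne.symm
  · rw [if_neg h1]
    have h2 : ((i : ℕ), (j : ℕ)) ∉ D := fun h => h1 (hD _ h)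
    unfold gf at hN
    rw [if_neg h2, Equiv.Perm.one_apply] at hN
    have hS' : So (mk n D) i j = none := by
      rw [hS, st_ge hD _ _ _ (by omega), lab_eq_none]; omega
    unfold tile
    by_cases h3 : (i : ℕ) + j + 2 = n + 1
    · rw [hlab _ (st_lt hD _ _ _ (by omega))] at hW hN
      rw [hW, hS', hN, if_pos h3]
      simp
    · have hW' : We (mk n D) i j = none := by
        rw [hW, st_ge hD _ _ _ (by omega), lab_eq_none]; omega
      rw [hW', hS', if_neg h3]

lemma mk_straight {D : Finset (ℕ × ℕ)} (hD : InTri n D) (i j : Fin n) :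
    straight (tile (mk n D) i j) ↔ ((i : ℕ), (j : ℕ)) ∈ D := by
  rw [mk_tile hD]
  constructor
  · intro h
    split_ifs at h <;> first | assumption | exact h.elim
  · intro h
    rw [if_pos (hD _ h), if_pos h]; trivial

lemma mk_swapSet {D : Finset (ℕ × ℕ)} (hD : InTri n D) : swapSet (mk n D) = D := by
  ext ⟨a, b⟩
  constructor
  · intro h
    have h' := h
    simp only [swapSet, Finset.mem_image, Finset.mem_filter, Finset.mem_univ, true_and] at h
    obtain ⟨p, h1, h2⟩ := h
    rw [← h2]
    exact (mk_straight hD _ _).mp h1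
  · intro h
    have := hD _ h
    simp only [] at this
    exact (mem_swapSet (mk n D) ⟨a, by omega⟩ ⟨b, by omega⟩).mpr ((mk_straight hD _ _).mpr h)

lemma mk_classic {D : Finset (ℕ × ℕ)} (hD : InTri n D) {w : Equiv.Perm (Fin n)}
    (hw : (piL D (triL 0 n))⁻¹ = iota w) (hc : D.card = invCount w) : IsClassic (mk n D) := by
  refine ⟨?_, ?_, ?_, ?_⟩
  · intro i j h
    rw [mk_tile hD, if_pos h]
    split_ifs <;> simp
  · intro i j h
    rw [mk_tile hD, if_neg (by omega), if_pos h]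
  · intro i j h
    rw [mk_tile hD, if_neg (by omega), if_neg (by omega)]
  · rw [← cross_eq_iff (mk_gpd hD hw), ← hc]
    conv_rhs => rw [← mk_swapSet hD, swapSet_eq, Finset.card_image_of_injective _ pair_inj]
    unfold tileCount strSet
    congr 1
    apply Finset.filter_congr
    intro p _
    rw [mk_tile hD]
    split_ifs <;> simp [straight]

/-! the sum -/

/-- shifted `x` -/
noncomputable def XX (n : ℕ) (i : ℕ) : MvPolynomial (XYA n) ℤ :=
  if h : i < n then MvPolynomial.X XYA.A + MvPolynomial.X (XYA.x ⟨i, h⟩) else 0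

/-- `y` -/
noncomputable def YY (n : ℕ) (j : ℕ) : MvPolynomial (XYA n) ℤ :=
  if h : j < n then MvPolynomial.X (XYA.y ⟨j, h⟩) else 0

lemma XX_val (i : Fin n) : XX n i = MvPolynomial.X XYA.A + MvPolynomial.X (XYA.x i) := by
  simp [XX]

lemma YY_val (i : Fin n) : YY n i = MvPolynomial.X (XYA.y i) := by
  simp [YY]

/-- the operator polynomial -/
noncomputable def PP (w : Equiv.Perm (Fin n)) : MvPolynomial (XYA n) ℤ :=
  opL (fun c => XX n c.1 - YY n c.2) (triL 0 n) del (iota w)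

lemma mem_tri (D : Finset (ℕ × ℕ)) : D ∈ (triL 0 n).toFinset.powerset ↔ InTri n D := by
  rw [Finset.mem_powerset]
  constructor
  · intro h c hc
    have := h hc
    rw [List.mem_toFinset, mem_triL] at this
    omega
  · intro h c hc
    have := h c hc
    rw [List.mem_toFinset, mem_triL]
    omega

lemma PP_expand (w : Equiv.Perm (Fin n)) : PP w = ∑ D ∈ (triL 0 n).toFinset.powerset,
    if (piL D (triL 0 n))⁻¹ = iota w ∧ D.card = invCount w then
      ∏ c ∈ D, (XX n c.1 - YY n c.2) else 0 := by
  unfold PP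
  rw [opL_expand n _ _ (nodup_triL n 0) (fun c hc => by rw [mem_triL] at hc; omega), ell_iota]

lemma sum_eq_PP (w : Equiv.Perm (Fin n)) :
    (∑ d ∈ Finset.univ.filter (fun d : Pipes n => IsGPDof w d ∧ IsClassic d),
      ∏ p ∈ Finset.univ.filter (fun p : Fin n × Fin n => tile d p.1 p.2 = .cross), cw p) =
    PP w := by
  rw [PP_expand, ← Finset.sum_filter]
  apply Finset.sum_bij (fun d _ => swapSet d)
  · intro d hd
    simp only [Finset.mem_filter, Finset.mem_univ, true_and] at hd
    rw [Finset.mem_filter, mem_tri]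
    refine ⟨classic_inTri hd.2, final_iota hd.1 (classic_inTri hd.2), ?_⟩
    rw [swapSet_eq, Finset.card_image_of_injective _ pair_inj, classic_card hd.1 hd.2]
  · intro d hd d' hd' h
    simp only [Finset.mem_filter, Finset.mem_univ, true_and] at hd hd'
    exact good_ext (good_of hd.1) (good_of hd'.1) h
  · intro D hD
    rw [Finset.mem_filter, mem_tri] at hD
    refine ⟨mk n D, ?_, mk_swapSet hD.1⟩
    simp only [Finset.mem_filter, Finset.mem_univ, true_and]
    exact ⟨mk_gpd hD.1 hD.2.1, mk_classic hD.1 hD.2.1 hD.2.2⟩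
  · intro d hd
    simp only [Finset.mem_filter, Finset.mem_univ, true_and] at hd
    rw [swapSet_eq, Finset.prod_image (fun _ _ _ _ h => pair_inj h), classic_strSet hd.2]
    apply Finset.prod_congr rfl
    intro p _
    simp only [XX_val, YY_val]
    rfl
/-! ### Part F: the longest element and the recursion -/

/-- the full triangle -/
def full (n : ℕ) : Finset (ℕ × ℕ) := (triL 0 n).toFinset

lemma full_inTri : InTri n (full n) := by
  rw [← mem_tri]; simp [full]

lemma mem_full (i j : ℕ) : (i, j) ∈ full n ↔ i + j + 2 ≤ n := by
  rw [full, List.mem_toFinset, mem_triL]; simp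

lemma full_row (i : ℕ) : ∀ m a, i + m + 1 ≤ n → piL (full n) (rowL i m) a =
    if i ≤ a ∧ a < i + m then a + 1 else if a = i + m then i else a := by
  intro m
  induction m with
  | zero =>
    intro a _
    simp only [rowL, piL, List.range_zero, List.map_nil, List.prod_nil, Equiv.Perm.one_apply]
    split_ifs <;> omega
  | succ m ih =>
    intro a h
    rw [piL_rowL_succ, Equiv.Perm.mul_apply]
    have : gf (full n) (i, m) = sN (i + m) := by
      unfold gf
      rw [if_pos ((mem_full _ _).mpr (by omega))]
    rw [this, ih _ (by omega), sN_apply]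
    split_ifs <;> omega

lemma full_tri : ∀ m i a, i + m = n → piL (full n) (triL i m) a =
    if i ≤ a ∧ a < i + m then 2 * i + m - 1 - a else a := by
  intro m
  induction m with
  | zero => intro i a _; simp [triL, piL]
  | succ m ih =>
    intro i a h
    rw [triL, piL_append, Equiv.Perm.mul_apply, full_row _ _ _ (by omega), ih _ _ (by omega)]
    split_ifs <;> omega

lemma full_inv : (piL (full n) (triL 0 n))⁻¹ = iota (Fin.revPerm : Equiv.Perm (Fin n)) := by
  apply iota_ext
  · intro i
    rw [Equiv.Perm.inv_eq_iff_eq, full_tri _ _ _ (by omega)]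
    have := i.2
    simp only [Fin.revPerm_apply, Fin.val_rev]
    split_ifs <;> omega
  · intro a ha
    rw [Equiv.Perm.inv_eq_iff_eq, piL_ge full_inTri a ha]

lemma full_card : (full n).card = invCount (Fin.revPerm : Equiv.Perm (Fin n)) := by
  unfold invCount
  symm
  apply Finset.card_bij (fun p _ => ((p.1 : ℕ), n - 1 - (p.2 : ℕ)))
  · rintro ⟨p, q⟩ h
    simp only [Finset.mem_filter, Finset.mem_univ, true_and, Fin.lt_def] at h
    have := q.2
    rw [mem_full]
    simp only []
    omega
  · rintro ⟨p, q⟩ _ ⟨p', q'⟩ _ h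
    simp only [Prod.mk.injEq] at h
    have h1 := q.2
    have h2 := q'.2
    rw [Fin.ext h.1, show q = q' from Fin.ext (by omega)]
  · rintro ⟨p, q⟩ h
    rw [mem_full] at h
    refine ⟨(⟨p, by omega⟩, ⟨n - 1 - q, by omega⟩), ?_, ?_⟩
    · simp only [Finset.mem_filter, Finset.mem_univ, true_and, Fin.lt_def, Fin.revPerm_apply,
        Fin.val_rev]
      omega
    · simp only [Prod.mk.injEq, true_and]; omega

lemma PP_rev : PP (Fin.revPerm : Equiv.Perm (Fin n)) =
    ∏ p ∈ Finset.univ.filter (fun p : Fin n × Fin n => (p.1 : ℕ) + (p.2 : ℕ) + 2 ≤ n), cw p := by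
  rw [PP_expand, Finset.sum_eq_single (full n)]
  · rw [if_pos ⟨full_inv, full_card⟩]
    have : full n = (Finset.univ.filter
        (fun p : Fin n × Fin n => (p.1 : ℕ) + (p.2 : ℕ) + 2 ≤ n)).image
        (fun p => ((p.1 : ℕ), (p.2 : ℕ))) := by
      ext ⟨a, b⟩
      rw [mem_full]
      simp only [Finset.mem_image, Finset.mem_filter, Finset.mem_univ, true_and, Prod.mk.injEq]
      constructor
      · intro h
        exact ⟨(⟨a, by omega⟩, ⟨b, by omega⟩), h, rfl, rfl⟩
      · rintro ⟨p, h, rfl, rfl⟩; exact h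
    rw [this, Finset.prod_image (fun _ _ _ _ h => pair_inj h)]
    apply Finset.prod_congr rfl
    intro p _
    simp only [XX_val, YY_val]
    rfl
  · intro D hD hne
    rw [if_neg]
    rintro ⟨-, h⟩
    apply hne
    rw [← full_card] at h
    exact Finset.eq_of_subset_of_card_le (Finset.mem_powerset.mp hD) h.ge
  · intro h
    exact absurd (Finset.mem_powerset.mpr (Finset.Subset.refl _)) h

/-- swap of `x` variables -/
def sgA (i : Fin n) (hi : (i : ℕ) + 1 < n) : XYA n → XYA n
  | XYA.x k => XYA.x (adjSwap i hi k)
  | XYA.y k => XYA.y k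
  | XYA.A => XYA.A

lemma sgA_XX (i : Fin n) (hi : (i : ℕ) + 1 < n) (a : ℕ) :
    MvPolynomial.rename (R := ℤ) (sgA i hi) (XX n a) = XX n (sN i a) := by
  by_cases h : a < n
  · have e1 : XX n a = _ := XX_val ⟨a, h⟩
    have e2 : sN i a = (adjSwap i hi ⟨a, h⟩ : Fin n) := by
      rw [sN_apply, adjSwap, Equiv.swap_apply_def]
      simp only [Fin.ext_iff]
      split_ifs <;> simp_all
    rw [e1, e2, XX_val, map_add, MvPolynomial.rename_X, MvPolynomial.rename_X]
    rfl
  · rw [sN_ne _ _ (by omega) (by omega)]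
    simp [XX, h]

lemma sgA_YY (i : Fin n) (hi : (i : ℕ) + 1 < n) (a : ℕ) :
    MvPolynomial.rename (R := ℤ) (sgA i hi) (YY n a) = YY n a := by
  by_cases h : a < n
  · have e1 : YY n a = _ := YY_val ⟨a, h⟩
    rw [e1, MvPolynomial.rename_X]
    rfl
  · simp [YY, h]

lemma PP_rec (v : Equiv.Perm (Fin n)) (i : Fin n) (hi : (i : ℕ) + 1 < n)
    (h : v ⟨(i : ℕ) + 1, hi⟩ < v i) :
    MvPolynomial.rename (R := ℤ) (sgA i hi) (PP v) =
      PP v + (XX n (i + 1) - XX n i) * PP (v * adjSwap i hi) := by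
  have h1 := opL_map (MvPolynomial.rename (R := ℤ) (sgA i hi)).toRingHom
    (fun c => XX n c.1 - YY n c.2) (triL 0 n) (iota v)
  have h2 := opL_tri (XX n) (YY n) i n 0 (by omega) (by omega)
  have h3 : MvPolynomial.rename (R := ℤ) (sgA i hi) (PP v) =
      opL (fun c => XX n (sN i c.1) - YY n c.2) (triL 0 n) del (iota v) := by
    refine h1.trans ?_
    rw [opL_congr _ (fun c => XX n (sN i c.1) - YY n c.2)]
    intro c _
    change MvPolynomial.rename (R := ℤ) (sgA i hi) _ = _
    rw [map_sub, sgA_XX, sgA_YY]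
  rw [h3, h2, Module.End.mul_apply, hh]
  simp only [LinearMap.add_apply, Module.End.one_apply, LinearMap.smul_apply, Pi.add_apply,
    Pi.smul_apply, smul_eq_mul, U_apply]
  have h4 : iota v (i + 1) < iota v i := by
    have e := iota_val v ⟨(i : ℕ) + 1, hi⟩
    simp only [] at e
    rw [e, iota_val]; exact h
  rw [if_pos h4, ← iota_adj v i hi]
  rfl

lemma inv_lt (v : Equiv.Perm (Fin n)) (i : Fin n) (hi : (i : ℕ) + 1 < n)
    (h : v ⟨(i : ℕ) + 1, hi⟩ < v i) : invCount (v * adjSwap i hi) + 1 = invCount v := by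
  rw [← ell_iota, ← ell_iota, iota_adj]
  apply ell_desc _ _ hi
  have e := iota_val v ⟨(i : ℕ) + 1, hi⟩
  simp only [] at e
  rw [e, iota_val]; exact h

lemma exists_asc (w : Equiv.Perm (Fin n)) (h : w ≠ Fin.revPerm) :
    ∃ (i : Fin n) (hi : (i : ℕ) + 1 < n), w i < w ⟨(i : ℕ) + 1, hi⟩ := by
  by_contra! hc
  apply h
  have hc' : ∀ (i : Fin n) (hi : (i : ℕ) + 1 < n), w ⟨(i : ℕ) + 1, hi⟩ < w i := by
    intro i hi
    apply lt_of_le_of_ne (hc i hi)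
    intro e
    have := congrArg Fin.val (w.injective e)
    simp at this
  cases n with
  | zero => ext i; exact i.elim0
  | succ m =>
    have hanti : StrictAnti w := by
      rw [Fin.strictAnti_iff_succ_lt]
      intro i
      exact hc' i.castSucc (by simp)
    have hm : StrictMono (fun i => Fin.rev (w i)) := fun a b hab =>
      Fin.rev_lt_rev.mpr (hanti hab)
    have hid : ∀ i, Fin.rev (w i) = i := by
      have hr : Set.range (fun i => Fin.rev (w i)) = Set.range (id : Fin (m+1) → Fin (m+1)) := by
        rw [Set.range_id, Set.range_eq_univ]
        exact Fin.rev_surjective.comp w.surjective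
      have := StrictMono.range_inj hm strictMono_id |>.mp hr
      intro i
      exact congrFun this i
    ext i
    rw [Fin.revPerm_apply, ← hid i, Fin.rev_rev, hid i]

/-- evaluation -/
noncomputable def evS (e : XY n → MvPolynomial (XYA n) ℤ) :
    MvPolynomial (XY n) ℤ →ₐ[ℤ] MvPolynomial (XYA n) ℤ :=
  MvPolynomial.aeval (R := ℤ) (S₁ := MvPolynomial (XYA n) ℤ) e

/-- the substitution used for evaluation -/
def IsEv (e : XY n → MvPolynomial (XYA n) ℤ) : Prop :=
  (∀ i, e (XY.x i) = MvPolynomial.X XYA.A + MvPolynomial.X (XYA.x i)) ∧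
  (∀ i, e (XY.y i) = MvPolynomial.X (XYA.y i))

/-- the exchange of variables -/
def IsSg (i : Fin n) (hi : (i : ℕ) + 1 < n) (s : XY n → XY n) : Prop :=
  (∀ k, s (XY.x k) = XY.x (adjSwap i hi k)) ∧ (∀ k, s (XY.y k) = XY.y k)

lemma evS_x {e : XY n → MvPolynomial (XYA n) ℤ} (he : IsEv e) (i : Fin n) :
    evS e (MvPolynomial.X (XY.x i)) = MvPolynomial.X XYA.A + MvPolynomial.X (XYA.x i) := by
  simp [evS, he.1]

lemma evS_y {e : XY n → MvPolynomial (XYA n) ℤ} (he : IsEv e) (i : Fin n) :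
    evS e (MvPolynomial.X (XY.y i)) = MvPolynomial.X (XYA.y i) := by
  simp [evS, he.2]

lemma evS_rename {e : XY n → MvPolynomial (XYA n) ℤ} (he : IsEv e) (i : Fin n)
    (hi : (i : ℕ) + 1 < n) {s : XY n → XY n} (hs : IsSg i hi s) (f : MvPolynomial (XY n) ℤ) :
    evS e (MvPolynomial.rename s f) = MvPolynomial.rename (R := ℤ) (sgA i hi) (evS e f) := by
  rw [← AlgHom.comp_apply, ← AlgHom.comp_apply]
  congr 1
  apply MvPolynomial.algHom_ext
  intro z
  rw [AlgHom.comp_apply, AlgHom.comp_apply, MvPolynomial.rename_X]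
  cases z with
  | x k => simp only [hs.1, evS_x he, map_add, MvPolynomial.rename_X]; rfl
  | y k => simp only [hs.2, evS_y he, MvPolynomial.rename_X]; rfl

lemma PP_eq {e : XY n → MvPolynomial (XYA n) ℤ} (he : IsEv e)
    (s : ∀ i : Fin n, (i : ℕ) + 1 < n → XY n → XY n) (hs : ∀ i hi, IsSg i hi (s i hi))
    (S : Equiv.Perm (Fin n) → MvPolynomial (XY n) ℤ)
    (hbase : S Fin.revPerm =
      ∏ p ∈ Finset.univ.filter (fun p : Fin n × Fin n => (p.1 : ℕ) + (p.2 : ℕ) + 2 ≤ n),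
        (MvPolynomial.X (XY.x p.1) - MvPolynomial.X (XY.y p.2)))
    (hrec : ∀ (v : Equiv.Perm (Fin n)) (i : Fin n) (hi : (i : ℕ) + 1 < n),
      invCount (v * adjSwap i hi) < invCount v →
      (MvPolynomial.X (XY.x i) - MvPolynomial.X (XY.x ⟨(i : ℕ) + 1, hi⟩)) *
          S (v * adjSwap i hi) =
        S v - MvPolynomial.rename (s i hi) (S v)) :
    ∀ (N : ℕ) (w : Equiv.Perm (Fin n)), n * n ≤ invCount w + N → PP w = evS e (S w) := by
  have hb : PP (Fin.revPerm : Equiv.Perm (Fin n)) = evS e (S Fin.revPerm) := by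
    rw [hbase, PP_rev, map_prod]
    apply Finset.prod_congr rfl
    intro p _
    rw [map_sub, evS_x he, evS_y he]
    rfl
  have hbd : ∀ w : Equiv.Perm (Fin n), invCount w ≤ n * n := by
    intro w
    unfold invCount
    refine (Finset.card_le_univ _).trans ?_
    simp
  have step : ∀ (w : Equiv.Perm (Fin n)) (i : Fin n) (hi : (i : ℕ) + 1 < n),
      w i < w ⟨(i : ℕ) + 1, hi⟩ → invCount (w * adjSwap i hi) = invCount w + 1 ∧
      (PP (w * adjSwap i hi) = evS e (S (w * adjSwap i hi)) → PP w = evS e (S w)) := by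
    intro w i hi h
    obtain ⟨v, hv⟩ : ∃ v, v = w * adjSwap i hi := ⟨_, rfl⟩
    have hw : v * adjSwap i hi = w := by
      rw [hv, mul_assoc, adjSwap, Equiv.swap_mul_self, mul_one]
    have hd : v ⟨(i : ℕ) + 1, hi⟩ < v i := by
      rw [hv, Equiv.Perm.mul_apply, Equiv.Perm.mul_apply, adjSwap, Equiv.swap_apply_left,
        Equiv.swap_apply_right]
      exact h
    have hl := inv_lt v i hi hd
    have h1 := PP_rec v i hi hd
    have h2 := congrArg (evS e) (hrec v i hi (by omega))
    rw [hw] at hl h1 h2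
    rw [← hv]
    refine ⟨hl.symm, fun ih => ?_⟩
    rw [map_mul, map_sub, map_sub, evS_rename he i hi (hs i hi), ← ih, h1, evS_x he, evS_x he] at h2
    have eX := XX_val (⟨(i : ℕ) + 1, hi⟩ : Fin n)
    simp only [] at eX
    rw [eX, XX_val] at h2
    have hne : (MvPolynomial.X (XYA.x i) - MvPolynomial.X (XYA.x ⟨(i : ℕ) + 1, hi⟩) :
        MvPolynomial (XYA n) ℤ) ≠ 0 := by
      rw [sub_ne_zero]
      intro hh
      have := MvPolynomial.X_injective hh
      simp [Fin.ext_iff] at this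
    apply mul_left_cancel₀ hne
    linear_combination -h2
  intro N
  induction N with
  | zero =>
    intro w hN
    by_cases hw : w = Fin.revPerm
    · rw [hw, hb]
    · obtain ⟨i, hi, h⟩ := exists_asc w hw
      have := (step w i hi h).1
      have := hbd (w * adjSwap i hi)
      omega
  | succ N ih =>
    intro w hN
    by_cases hw : w = Fin.revPerm
    · rw [hw, hb]
    · obtain ⟨i, hi, h⟩ := exists_asc w hw
      obtain ⟨h1, h2⟩ := step w i hi h
      exact h2 (ih _ (by omega))

theorem statement1 {n : ℕ} (hn : 1 ≤ n)
    (S : Equiv.Perm (Fin n) → MvPolynomial (XY n) ℤ)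
    -- the base case of the definition of double Schubert polynomials:
    -- `S_{w₀} = ∏_{i + j ≤ n} (xᵢ - yⱼ)` (1-indexed)
    (hbase : S Fin.revPerm =
      ∏ p ∈ Finset.univ.filter (fun p : Fin n × Fin n => (p.1 : ℕ) + (p.2 : ℕ) + 2 ≤ n),
        (MvPolynomial.X (XY.x p.1) - MvPolynomial.X (XY.y p.2)))
    -- the divided difference recursion: if `ℓ(v sᵢ) < ℓ(v)` then
    -- `(xᵢ - xᵢ₊₁) · S_{v sᵢ} = S_v - sᵢ · S_v`
    (hrec : ∀ (v : Equiv.Perm (Fin n)) (i : Fin n) (hi : (i : ℕ) + 1 < n),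
      invCount (v * adjSwap i hi) < invCount v →
      (MvPolynomial.X (XY.x i) - MvPolynomial.X (XY.x ⟨(i : ℕ) + 1, hi⟩)) *
          S (v * adjSwap i hi) =
        S v - MvPolynomial.rename (fun z : XY n => match z with
          | XY.x k => XY.x (adjSwap i hi k)
          | XY.y k => XY.y k) (S v))
    (w : Equiv.Perm (Fin n)) :
    (GB w).coeff (n ^ 2 - invCount w) =
      (∑ d ∈ Finset.univ.filter (fun d : Pipes n => IsGPDof w d ∧ IsClassic d),
        ∏ p ∈ Finset.univ.filter (fun p : Fin n × Fin n => tile d p.1 p.2 = .cross),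
          (MvPolynomial.X XYA.A + MvPolynomial.X (XYA.x p.1) - MvPolynomial.X (XYA.y p.2))) ∧
    (∑ d ∈ Finset.univ.filter (fun d : Pipes n => IsGPDof w d ∧ IsClassic d),
        ∏ p ∈ Finset.univ.filter (fun p : Fin n × Fin n => tile d p.1 p.2 = .cross),
          (MvPolynomial.X XYA.A + MvPolynomial.X (XYA.x p.1) - MvPolynomial.X (XYA.y p.2))) =
      MvPolynomial.aeval (R := ℤ) (S₁ := MvPolynomial (XYA n) ℤ)
        (fun z : XY n => match z with
          | XY.x i => MvPolynomial.X XYA.A + MvPolynomial.X (XYA.x i)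
          | XY.y j => MvPolynomial.X (XYA.y j)) (S w) := by
  refine ⟨coeff_GB w, (sum_eq_PP w).trans ?_⟩
  exact PP_eq ⟨fun _ => rfl, fun _ => rfl⟩ _ (fun _ _ => ⟨fun _ => rfl, fun _ => rfl⟩) S hbase hrec
    (n * n) w (by omega)

end GPDpaper
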